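/- arXiv:1410.1440 — 5 statements merged into one kernel-verified Lean document; each statement's English description precedes it below -/
import Mathlib

section
/- For every integer k ≥ 1 and every real number λ, the infinite product ∏_{j=0}^∞ (1 + λ²/(4(j+k)²)) converges and equals Γ(k)² / (Γ(k + iλ/2) · Γ(k − iλ/2)), where Γ denotes the complex Gamma function; in particular this quotient of Gamma values is a positive real number. -/
/-!
By Euler's limit formula, `Γ(s)` is the limit of `n ^ s * n! / ∏_{j ≤ n} (s + j)`
(`Complex.GammaSeq`). In the quotient `Γ(k)² / (Γ(k + a) Γ(k - a))` with `a = iλ/2`, the factors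
`n ^ s * n!` cancel, leaving `∏_{j ≤ n} (k + j + a)(k + j - a) / (k + j)²`, whose `j`-th factor is
`1 + λ²/(4(j+k)²)`. So the partial products converge to the quotient, and absolute convergence
makes this limit the value of the infinite product. Positivity holds because
`Γ(k - a)` is the complex conjugate of `Γ(k + a)`, so the denominator is `|Γ(k + a)|²`.
-/

open Filter Topology

/-- The factors `n ^ s * n!` in Euler's approximations cancel in the Gamma quotient. -/
lemma gammaSeq_quotient_eq_prod (z a : ℂ) (hz : ∀ j : ℕ, z + j ≠ 0) {n : ℕ} (hn : n ≠ 0) :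
    Complex.GammaSeq z n ^ 2 / (Complex.GammaSeq (z + a) n * Complex.GammaSeq (z - a) n)
      = ∏ j ∈ Finset.range (n + 1), (1 - a ^ 2 / ((j : ℂ) + z) ^ 2) := by
  have hn' : (n : ℂ) ≠ 0 := Nat.cast_ne_zero.mpr hn
  have hf : ((n.factorial : ℕ) : ℂ) ≠ 0 := Nat.cast_ne_zero.mpr n.factorial_ne_zero
  have hfac : ∏ j ∈ Finset.range (n + 1), (1 - a ^ 2 / ((j : ℂ) + z) ^ 2)
      = (∏ j ∈ Finset.range (n + 1), (z + a + j)) * (∏ j ∈ Finset.range (n + 1), (z - a + j))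
        / (∏ j ∈ Finset.range (n + 1), (z + j)) ^ 2 := by
    rw [← Finset.prod_mul_distrib, ← Finset.prod_pow, ← Finset.prod_div_distrib]
    refine Finset.prod_congr rfl fun j _ => ?_
    have := hz j
    rw [add_comm (j : ℂ) z]
    field_simp
    ring
  have hpow : (n : ℂ) ^ (z + a) * (n : ℂ) ^ (z - a) = ((n : ℂ) ^ z) ^ 2 := by
    rw [← Complex.cpow_add _ _ hn', sq, ← Complex.cpow_add _ _ hn']
    ring_nf
  have hne : (n : ℂ) ^ z ≠ 0 := by simp [Complex.cpow_eq_zero_iff, hn']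
  rw [hfac]
  unfold Complex.GammaSeq
  rw [div_mul_div_comm, mul_mul_mul_comm, hpow, div_pow, div_div_div_eq, mul_pow,
    ← sq (n.factorial : ℂ), mul_comm ((∏ j ∈ Finset.range (n + 1), (z + j)) ^ 2)]
  exact mul_div_mul_left _ _ (mul_ne_zero (pow_ne_zero 2 hne) (pow_ne_zero 2 hf))

/-- For `k ≥ 1` and real `λ`, the product `∏_{j=0}^∞ (1 + λ²/(4(j+k)²))` converges and equals
`Γ(k)² / (Γ(k + iλ/2) Γ(k − iλ/2))` for the complex Gamma function; in particular this quotient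
of Gamma values is a positive real number. -/
theorem stmt_2 (k : ℕ) (hk : 1 ≤ k) (l : ℝ) :
    Multipliable (fun j : ℕ => (1 : ℂ) + (l : ℂ) ^ 2 / (4 * ((j : ℂ) + (k : ℂ)) ^ 2)) ∧
    ∏' j : ℕ, ((1 : ℂ) + (l : ℂ) ^ 2 / (4 * ((j : ℂ) + (k : ℂ)) ^ 2))
      = Complex.Gamma (k : ℂ) ^ 2 /
          (Complex.Gamma ((k : ℂ) + Complex.I * l / 2) *
            Complex.Gamma ((k : ℂ) - Complex.I * l / 2)) ∧
    ∃ r : ℝ, 0 < r ∧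
      Complex.Gamma (k : ℂ) ^ 2 /
          (Complex.Gamma ((k : ℂ) + Complex.I * l / 2) *
            Complex.Gamma ((k : ℂ) - Complex.I * l / 2)) = (r : ℂ) := by
  have hk0 : (0 : ℝ) < k := by exact_mod_cast hk
  have hplus : Complex.Gamma ((k : ℂ) + Complex.I * l / 2) ≠ 0 :=
    Complex.Gamma_ne_zero_of_re_pos (by simpa using hk0)
  have hminus : Complex.Gamma ((k : ℂ) - Complex.I * l / 2) ≠ 0 :=
    Complex.Gamma_ne_zero_of_re_pos (by simpa using hk0)
  have hmul : Multipliable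
      (fun j : ℕ => (1 : ℂ) + (l : ℂ) ^ 2 / (4 * ((j : ℂ) + (k : ℂ)) ^ 2)) := by
    apply Complex.multipliable_one_add_of_summable
    have hbase : Summable fun j : ℕ => (1 : ℂ) / (j : ℂ) ^ 2 := by
      have hreal : Summable fun j : ℕ => (1 : ℝ) / (j : ℝ) ^ 2 :=
        Real.summable_one_div_nat_pow.mpr one_lt_two
      exact (Complex.ofRealCLM.summable hreal).congr fun j => by simp
    have h : Summable fun j : ℕ => (1 : ℂ) / ((j + k : ℕ) : ℂ) ^ 2 :=
      (summable_nat_add_iff (f := fun j : ℕ => (1 : ℂ) / (j : ℂ) ^ 2) k).mpr hbase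
    refine (h.mul_left ((l : ℂ) ^ 2 / 4)).congr fun j => ?_
    push_cast
    rw [div_mul_div_comm, mul_one]
  refine ⟨hmul, ?_, ?_⟩
  · have hlim := ((Complex.GammaSeq_tendsto_Gamma (k : ℂ)).pow 2).div
      ((Complex.GammaSeq_tendsto_Gamma ((k : ℂ) + Complex.I * l / 2)).mul
        (Complex.GammaSeq_tendsto_Gamma ((k : ℂ) - Complex.I * l / 2))) (mul_ne_zero hplus hminus)
    -- `GammaSeq _ n` has `n + 1` factors in its denominator, hence the shift of the partial products.
    refine tendsto_nhds_unique (hmul.hasProd.tendsto_prod_nat.comp (tendsto_add_atTop_nat 1))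
      (hlim.congr' ?_)
    filter_upwards [eventually_ne_atTop 0] with n hn
    have hz : ∀ j : ℕ, (k : ℂ) + j ≠ 0 := fun j => by
      exact_mod_cast (by omega : k + j ≠ 0)
    refine (gammaSeq_quotient_eq_prod (k : ℂ) (Complex.I * l / 2) hz hn).trans ?_
    refine Finset.prod_congr rfl fun j _ => ?_
    rw [div_pow, mul_pow, Complex.I_sq, div_div]
    norm_num
    ring
  · have hconj : Complex.Gamma ((k : ℂ) - Complex.I * l / 2)
        = (starRingEnd ℂ) (Complex.Gamma ((k : ℂ) + Complex.I * l / 2)) := by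
      rw [← Complex.Gamma_conj]
      congr 1
      simp [sub_eq_add_neg, neg_div, Complex.conj_ofNat]
    refine ⟨Real.Gamma k ^ 2 / Complex.normSq (Complex.Gamma ((k : ℂ) + Complex.I * l / 2)),
      div_pos (pow_pos (Real.Gamma_pos_of_pos hk0) 2) (Complex.normSq_pos.mpr hplus), ?_⟩
    rw [hconj, Complex.mul_conj]
    push_cast [← Complex.Gamma_ofReal]
    rfl
end

section
/- For every real number L ≥ 0, (2/π²) · ( ∫_0^1 sin²(πLk)/k dk + ∫_1^∞ sin²(πLk)/k² dk ) ≤ 2 + (2/π²)·log(1 + L), and both integrals are finite. -/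
open MeasureTheory

/-!
With `c = 1 / (1 + L)`, the integrand `sin²(πLk)/k` is at most `(πL)² k` on `(0, c]`, which
contributes at most `π²/2` since `L c ≤ 1`, and at most `1/k` on `(c, 1]`, which contributes exactly
`log (1 + L)`. The integral over `(1, ∞)` is at most `∫ k⁻² = 1 ≤ π²/2`. Hence the bracket is at
most `π² + log (1 + L)`.
-/

/-- For every `L ≥ 0`, both integrals `∫_0^1 sin²(πLk)/k dk` and `∫_1^∞ sin²(πLk)/k² dk` are
finite, and `(2/π²)(∫_0^1 sin²(πLk)/k dk + ∫_1^∞ sin²(πLk)/k² dk) ≤ 2 + (2/π²) log(1+L)`. -/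
theorem stmt_4 (L : ℝ) (hL : 0 ≤ L) :
    IntegrableOn (fun k : ℝ => Real.sin (Real.pi * L * k) ^ 2 / k) (Set.Ioc 0 1) ∧
    IntegrableOn (fun k : ℝ => Real.sin (Real.pi * L * k) ^ 2 / k ^ 2) (Set.Ioi 1) ∧
    (2 / Real.pi ^ 2) *
        ((∫ k in Set.Ioc (0 : ℝ) 1, Real.sin (Real.pi * L * k) ^ 2 / k) +
          ∫ k in Set.Ioi (1 : ℝ), Real.sin (Real.pi * L * k) ^ 2 / k ^ 2)
      ≤ 2 + (2 / Real.pi ^ 2) * Real.log (1 + L) := by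
  have near_zero : ∀ k : ℝ, 0 < k →
      Real.sin (Real.pi * L * k) ^ 2 / k ≤ (Real.pi * L) ^ 2 * k := by
    intro k hk
    rw [div_le_iff₀ hk]
    have h : Real.sin (Real.pi * L * k) ^ 2 ≤ (Real.pi * L * k) ^ 2 := sq_le_sq.2 Real.abs_sin_le_abs
    linarith
  have far : ∀ k : ℝ, 0 < k → Real.sin (Real.pi * L * k) ^ 2 / k ≤ 1 / k := fun k hk => by
    gcongr
    exact Real.sin_sq_le_one _
  have tail : ∀ k : ℝ, 1 < k → Real.sin (Real.pi * L * k) ^ 2 / k ^ 2 ≤ k ^ (-2 : ℝ) := by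
    intro k hk
    have hk0 : 0 < k := by linarith
    rw [Real.rpow_neg hk0.le, Real.rpow_two, ← one_div]
    gcongr
    exact Real.sin_sq_le_one _
  have int_one : IntegrableOn (fun k : ℝ => Real.sin (Real.pi * L * k) ^ 2 / k)
      (Set.Ioc 0 1) := by
    have hg : IntegrableOn (fun k : ℝ => (Real.pi * L) ^ 2 * k) (Set.Ioc 0 1) :=
      (Continuous.integrableOn_Ioc (by fun_prop))
    refine Integrable.mono' hg (Measurable.aestronglyMeasurable (by fun_prop)) ?_
    filter_upwards [ae_restrict_mem measurableSet_Ioc] with k hk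
    have hk0 := hk.1
    rw [Real.norm_of_nonneg (by positivity)]
    exact near_zero k hk.1
  have int_pow : IntegrableOn (fun k : ℝ => k ^ (-2 : ℝ)) (Set.Ioi 1) :=
    integrableOn_Ioi_rpow_of_lt (by norm_num) one_pos
  have int_two : IntegrableOn (fun k : ℝ => Real.sin (Real.pi * L * k) ^ 2 / k ^ 2)
      (Set.Ioi 1) := by
    refine Integrable.mono' int_pow (Measurable.aestronglyMeasurable (by fun_prop)) ?_
    filter_upwards [ae_restrict_mem measurableSet_Ioi] with k hk
    rw [Real.norm_of_nonneg (by positivity)]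
    exact tail k hk
  refine ⟨int_one, int_two, ?_⟩
  have tail_le : ∫ k in Set.Ioi (1 : ℝ), Real.sin (Real.pi * L * k) ^ 2 / k ^ 2 ≤ 1 := by
    refine (setIntegral_mono_on int_two int_pow measurableSet_Ioi tail).trans ?_
    rw [integral_Ioi_rpow_of_lt (by norm_num) one_pos]
    norm_num
  have head_le : ∫ k in Set.Ioc (0 : ℝ) 1, Real.sin (Real.pi * L * k) ^ 2 / k
      ≤ Real.pi ^ 2 / 2 + Real.log (1 + L) := by
    obtain ⟨c, hc⟩ : ∃ c : ℝ, c = (1 + L)⁻¹ := ⟨_, rfl⟩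
    have hc0 : 0 < c := by rw [hc]; positivity
    have hc1 : c ≤ 1 := by rw [hc]; exact inv_le_one_of_one_le₀ (by linarith)
    have hLc : L * c ≤ 1 := by
      rw [hc, ← div_eq_mul_inv, div_le_one (by positivity)]
      linarith
    have i1 : IntervalIntegrable (fun k : ℝ => Real.sin (Real.pi * L * k) ^ 2 / k) volume 0 c :=
      (intervalIntegrable_iff_integrableOn_Ioc_of_le hc0.le).2
        (int_one.mono_set (Set.Ioc_subset_Ioc_right hc1))
    have i2 : IntervalIntegrable (fun k : ℝ => Real.sin (Real.pi * L * k) ^ 2 / k) volume c 1 :=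
      (intervalIntegrable_iff_integrableOn_Ioc_of_le hc1).2
        (int_one.mono_set (Set.Ioc_subset_Ioc_left hc0.le))
    rw [← intervalIntegral.integral_of_le zero_le_one,
      ← intervalIntegral.integral_add_adjacent_intervals i1 i2]
    refine add_le_add ?_ ?_
    · have h := intervalIntegral.integral_mono_on_of_le_Ioo hc0.le i1
        (Continuous.intervalIntegrable (u := fun k : ℝ => (Real.pi * L) ^ 2 * k)
          (by fun_prop) 0 c) (fun k hk => near_zero k hk.1)
      refine h.trans ?_
      rw [intervalIntegral.integral_const_mul, integral_id]
      have h2 : (L * c) ^ 2 ≤ 1 := pow_le_one₀ (by positivity) hLc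
      nlinarith [mul_le_mul_of_nonneg_left h2 (sq_nonneg Real.pi)]
    · have h0 : (0 : ℝ) ∉ Set.uIcc c 1 := by
        rw [Set.uIcc_of_le hc1]
        exact fun h => absurd h.1 (not_le.2 hc0)
      have h := intervalIntegral.integral_mono_on_of_le_Ioo hc1 i2
        (intervalIntegral.intervalIntegrable_one_div (f := fun k : ℝ => k)
          (fun x hx hx0 => h0 (hx0 ▸ hx)) continuousOn_id)
        (fun k hk => far k (hc0.trans hk.1))
      refine h.trans ?_
      rw [integral_one_div h0, hc, one_div, inv_inv]
  have hpi := Real.pi_gt_three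
  have hsq : 0 < Real.pi ^ 2 := by positivity
  calc _ ≤ 2 / Real.pi ^ 2 * (Real.pi ^ 2 + Real.log (1 + L)) := by
        refine mul_le_mul_of_nonneg_left ?_ (by positivity)
        nlinarith
    _ = _ := by field_simp
end

section
/- Let (Ω, 𝔉, P) be a probability space, let Y : Ω → [0, ∞) be a nonnegative random variable, and let v > 0 be such that P(Y ≥ t) ≤ exp( −min( t²/(4v), t/2 ) ) for all t ≥ 0. Then for every q with 0 ≤ q < 1/2, E[e^{qY}] ≤ 1/(1 − 2q) + q·√(4πv)·e^{4q²v}. -/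
/-!
Layer-cake argument: `E[e^{qY}] = 1 + ∫₀^∞ q e^{qt} P(Y ≥ t) dt`. Bounding the tail by
`e^{-t/2} + e^{-t²/(4v)}`, the exponential part contributes `2q/(1-2q)`, which together with the
leading `1` gives `1/(1-2q)`. In the Gaussian part, completing the square and extending the
integral to all of `ℝ` gives `q √(4πv) e^{q²v}`, which is at most `q √(4πv) e^{4q²v}`.
-/

open MeasureTheory

lemma exp_part (q : ℝ) (hq : q < 1 / 2) :
    ∫⁻ t in Set.Ioi (0 : ℝ), ENNReal.ofReal (Real.exp ((q - 1 / 2) * t))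
      = ENNReal.ofReal (2 / (1 - 2 * q)) := by
  have hneg : q - 1 / 2 < 0 := by linarith
  rw [← ofReal_integral_eq_lintegral_ofReal (integrableOn_exp_mul_Ioi hneg 0)
    (Filter.Eventually.of_forall fun t => (Real.exp_pos _).le), integral_exp_mul_Ioi hneg]
  congr 1
  have h1 : 1 - 2 * q ≠ 0 := by linarith
  have h2 : q - 1 / 2 ≠ 0 := hneg.ne
  rw [mul_zero, Real.exp_zero, div_eq_div_iff h2 h1]
  ring

lemma gauss_part (v : ℝ) (hv : 0 < v) (q : ℝ) :
    ∫⁻ t in Set.Ioi (0 : ℝ), ENNReal.ofReal (Real.exp (q * t - t ^ 2 / (4 * v)))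
      ≤ ENNReal.ofReal (Real.sqrt (4 * Real.pi * v) * Real.exp (q ^ 2 * v)) := by
  have hb : 0 < 1 / (4 * v) := by positivity
  have hsq : ∀ t : ℝ, Real.exp (q * t - t ^ 2 / (4 * v))
      = Real.exp (-(1 / (4 * v)) * (t - 2 * q * v) ^ 2) * Real.exp (q ^ 2 * v) := by
    intro t
    rw [← Real.exp_add]
    congr 1
    field_simp
    ring
  have hint : Integrable (fun t : ℝ =>
      Real.exp (-(1 / (4 * v)) * (t - 2 * q * v) ^ 2) * Real.exp (q ^ 2 * v)) :=
    ((integrable_exp_neg_mul_sq hb).comp_sub_right (2 * q * v)).mul_const _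
  refine (setLIntegral_le_lintegral _ _).trans (le_of_eq ?_)
  simp_rw [hsq]
  rw [← ofReal_integral_eq_lintegral_ofReal hint
    (Filter.Eventually.of_forall fun t => by positivity), integral_mul_const,
    integral_sub_right_eq_self (fun t : ℝ => Real.exp (-(1 / (4 * v)) * t ^ 2)),
    integral_gaussian]
  congr 3
  field_simp

/-- If a nonnegative random variable `Y` on a probability space satisfies the Bernstein-type tail
bound `P(Y ≥ t) ≤ exp(−min(t²/(4v), t/2))` for all `t ≥ 0`, then for every `0 ≤ q < 1/2`,
`E[e^{qY}] ≤ 1/(1 − 2q) + q √(4πv) e^{4q²v}`. -/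
theorem stmt_5 {Ω : Type*} [MeasurableSpace Ω] (P : Measure Ω) [IsProbabilityMeasure P]
    (Y : Ω → ℝ) (hY : Measurable Y) (hY0 : ∀ ω, 0 ≤ Y ω) (v : ℝ) (hv : 0 < v)
    (htail : ∀ t : ℝ, 0 ≤ t →
      P {ω | t ≤ Y ω} ≤ ENNReal.ofReal (Real.exp (-(min (t ^ 2 / (4 * v)) (t / 2)))))
    (q : ℝ) (hq0 : 0 ≤ q) (hq : q < 1 / 2) :
    ∫⁻ ω, ENNReal.ofReal (Real.exp (q * Y ω)) ∂P
      ≤ ENNReal.ofReal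
          (1 / (1 - 2 * q) + q * Real.sqrt (4 * Real.pi * v) * Real.exp (4 * q ^ 2 * v)) := by
  have hcont : Continuous fun t : ℝ => q * Real.exp (q * t) := by fun_prop
  have hprim : ∀ y : ℝ, ∫ t in (0 : ℝ)..y, q * Real.exp (q * t) = Real.exp (q * y) - 1 := by
    intro y
    have hd : ∀ t ∈ Set.uIcc 0 y,
        HasDerivAt (fun t : ℝ => Real.exp (q * t)) (q * Real.exp (q * t)) t := by
      intro t _
      have := ((hasDerivAt_id t).const_mul q).exp
      simpa [mul_comm] using this
    rw [intervalIntegral.integral_eq_sub_of_hasDerivAt hd (hcont.intervalIntegrable _ _)]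
    simp
  have hlayer := lintegral_comp_eq_lintegral_meas_le_mul P (f := Y)
    (g := fun t => q * Real.exp (q * t)) (Filter.Eventually.of_forall hY0) hY.aemeasurable
    (fun t _ => hcont.intervalIntegrable _ _)
    (Filter.Eventually.of_forall fun t => by positivity)
  simp_rw [hprim] at hlayer
  have hsplit : ∀ ω, ENNReal.ofReal (Real.exp (q * Y ω))
      = 1 + ENNReal.ofReal (Real.exp (q * Y ω) - 1) := by
    intro ω
    have h1 : 0 ≤ Real.exp (q * Y ω) - 1 :=
      sub_nonneg.2 (Real.one_le_exp (mul_nonneg hq0 (hY0 ω)))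
    rw [← ENNReal.ofReal_one, ← ENNReal.ofReal_add zero_le_one h1]
    congr 1
    ring
  have hpt : ∀ t ∈ Set.Ioi (0 : ℝ),
      P {ω | t ≤ Y ω} * ENNReal.ofReal (q * Real.exp (q * t))
        ≤ ENNReal.ofReal q * (ENNReal.ofReal (Real.exp ((q - 1 / 2) * t))
          + ENNReal.ofReal (Real.exp (q * t - t ^ 2 / (4 * v)))) := by
    intro t ht
    refine (mul_le_mul_left (htail t (le_of_lt ht)) _).trans ?_
    rw [← ENNReal.ofReal_add (Real.exp_pos _).le (Real.exp_pos _).le,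
      ← ENNReal.ofReal_mul (Real.exp_pos _).le, ← ENNReal.ofReal_mul hq0]
    refine ENNReal.ofReal_le_ofReal ?_
    have hmin : Real.exp (-(min (t ^ 2 / (4 * v)) (t / 2)))
        ≤ Real.exp (-(t / 2)) + Real.exp (-(t ^ 2 / (4 * v))) := by
      rcases min_choice (t ^ 2 / (4 * v)) (t / 2) with h | h <;> rw [h]
      · linarith [Real.exp_pos (-(t / 2))]
      · linarith [Real.exp_pos (-(t ^ 2 / (4 * v)))]
    calc _ ≤ (Real.exp (-(t / 2)) + Real.exp (-(t ^ 2 / (4 * v)))) * (q * Real.exp (q * t)) := by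
          gcongr
      _ = _ := by
          rw [show (q - 1 / 2) * t = -(t / 2) + q * t by ring,
            show q * t - t ^ 2 / (4 * v) = -(t ^ 2 / (4 * v)) + q * t by ring,
            Real.exp_add, Real.exp_add]
          ring
  have hden : 0 < 1 - 2 * q := by linarith
  calc ∫⁻ ω, ENNReal.ofReal (Real.exp (q * Y ω)) ∂P
      = 1 + ∫⁻ t in Set.Ioi (0 : ℝ),
          P {ω | t ≤ Y ω} * ENNReal.ofReal (q * Real.exp (q * t)) := by
        simp_rw [hsplit]
        rw [lintegral_add_left measurable_const, hlayer]
        simp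
    _ ≤ 1 + ∫⁻ t in Set.Ioi (0 : ℝ),
          ENNReal.ofReal q * (ENNReal.ofReal (Real.exp ((q - 1 / 2) * t))
          + ENNReal.ofReal (Real.exp (q * t - t ^ 2 / (4 * v)))) := by
        gcongr 1 + ?_
        exact setLIntegral_mono' measurableSet_Ioi hpt
    _ ≤ 1 + ENNReal.ofReal q * (ENNReal.ofReal (2 / (1 - 2 * q))
          + ENNReal.ofReal (Real.sqrt (4 * Real.pi * v) * Real.exp (q ^ 2 * v))) := by
        rw [lintegral_const_mul' _ _ ENNReal.ofReal_ne_top, lintegral_add_left (by fun_prop),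
          exp_part q hq]
        gcongr
        exact gauss_part v hv q
    _ = ENNReal.ofReal (1 + q * (2 / (1 - 2 * q)
          + Real.sqrt (4 * Real.pi * v) * Real.exp (q ^ 2 * v))) := by
        rw [← ENNReal.ofReal_add (by positivity) (by positivity), ← ENNReal.ofReal_mul hq0,
          ← ENNReal.ofReal_one, ← ENNReal.ofReal_add zero_le_one (by positivity)]
    _ ≤ _ := by
        refine ENNReal.ofReal_le_ofReal ?_
        have h1 : 1 + q * (2 / (1 - 2 * q)) = 1 / (1 - 2 * q) := by
          rw [eq_div_iff hden.ne', add_mul, mul_assoc, div_mul_cancel₀ _ hden.ne']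
          ring
        have h2 : q * Real.sqrt (4 * Real.pi * v) * Real.exp (q ^ 2 * v)
            ≤ q * Real.sqrt (4 * Real.pi * v) * Real.exp (4 * q ^ 2 * v) := by
          gcongr
          nlinarith [sq_nonneg q]
        linarith
end

section
/- Let C > 0 and let y : ℤ → ℝ be a sequence with y_k ≠ 0 for all k ∈ ℤ and |y_k − k| ≤ C·log(2 + |k|) for all k ∈ ℤ, and let ξ(z) = e^{iπz}·(1 − z/y_0)·∏_{k=1}^∞ [(1 − z/y_k)(1 − z/y_{−k})] be the associated entire function (the product converges absolutely and locally uniformly). Then for every z ∈ ℂ not belonging to {y_k : k ∈ ℤ}, the series 1/(z − y_0) + Σ_{k=1}^∞ [ 1/(z − y_k) + 1/(z − y_{−k}) ] converges and ξ′(z)/ξ(z) = iπ + 1/(z − y_0) + Σ_{k=1}^∞ [ 1/(z − y_k) + 1/(z − y_{−k}) ]. -/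
/-!
Pair the factors `k` and `-k` of the product. With `a = y_k`, `b = y_{-k}` the main terms `±k`
cancel in `a + b = O(log k)`, while `|a|, |b|, |w - a|, |w - b| ≥ k/2` for large `k`, uniformly for
`w` in a disc (`pair_bounds`). Hence both
`(1 - w/a)(1 - w/b) - 1 = (w² - w(a+b))/(ab)` and
`1/(w - a) + 1/(w - b) = (2w - (a+b))/((w - a)(w - b))`
are `O(log k / k²)`, which is summable. So the product converges locally uniformly in the disc and
does not vanish off the points `y_k`, and its logarithmic derivative may be taken termwise.
-/

open Filter Topology

/-- The entire function `ξ(z) = e^{iπz} (1 − z/y₀) ∏_{k≥1} (1 − z/y_k)(1 − z/y_{−k})` associated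
to a sequence `y : ℤ → ℝ`. -/
noncomputable def xiFun (y : ℤ → ℝ) : ℂ → ℂ := fun z =>
  Complex.exp (Real.pi * Complex.I * z) * (1 - z / (y 0 : ℂ)) *
    ∏' k : ℕ, ((1 - z / (y ((k : ℤ) + 1) : ℂ)) * (1 - z / (y (-((k : ℤ) + 1)) : ℂ)))

lemma summable_log_div_sq (A B : ℝ) :
    Summable (fun k : ℕ => (A + B * Real.log (2 + ((k : ℝ) + 1))) / ((k : ℝ) + 1) ^ 2) := by
  have h1 : Summable (fun k : ℕ => 1 / ((k : ℝ) + 1) ^ 2) := by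
    have := (summable_nat_add_iff 1).2 (Real.summable_one_div_nat_pow (p := 2) |>.2 (by norm_num))
    simpa using this
  have h2 : Summable (fun k : ℕ => 1 / ((k : ℝ) + 1) ^ (3 / 2 : ℝ)) := by
    have := (summable_nat_add_iff 1).2
      (Real.summable_one_div_nat_rpow (p := 3 / 2) |>.2 (by norm_num))
    simpa using this
  have h3 : Summable (fun k : ℕ => Real.log (2 + ((k : ℝ) + 1)) / ((k : ℝ) + 1) ^ 2) := by
    refine Summable.of_nonneg_of_le (fun k => ?_) (fun k => ?_)
      (h2.mul_left (2 * (3 : ℝ) ^ (1 / 2 : ℝ)))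
    · exact div_nonneg (Real.log_nonneg (by have := k.cast_nonneg (α := ℝ); linarith))
        (by positivity)
    · have hk := k.cast_nonneg (α := ℝ)
      have hm : (0 : ℝ) < (k : ℝ) + 1 := by positivity
      have hlog : Real.log (2 + ((k : ℝ) + 1)) ≤
          2 * (3 : ℝ) ^ (1 / 2 : ℝ) * ((k : ℝ) + 1) ^ (1 / 2 : ℝ) := by
        calc Real.log (2 + ((k : ℝ) + 1)) ≤ Real.log (3 * ((k : ℝ) + 1)) :=
              Real.log_le_log (by positivity) (by linarith)
          _ ≤ (3 * ((k : ℝ) + 1)) ^ (1 / 2 : ℝ) / (1 / 2) :=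
              Real.log_le_rpow_div (by positivity) (by norm_num)
          _ = _ := by rw [Real.mul_rpow (by norm_num) hm.le]; ring
      have hsq : ((k : ℝ) + 1) ^ 2 = ((k : ℝ) + 1) ^ (1 / 2 : ℝ) * ((k : ℝ) + 1) ^ (3 / 2 : ℝ) := by
        rw [← Real.rpow_add hm, ← Real.rpow_natCast]; norm_num
      rw [hsq, mul_one_div, div_le_div_iff₀ (by positivity) (by positivity)]
      have : (0 : ℝ) ≤ ((k : ℝ) + 1) ^ (3 / 2 : ℝ) := by positivity
      nlinarith [mul_le_mul_of_nonneg_right hlog this]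
  refine ((h1.mul_left A).add (h3.mul_left B)).congr fun k => ?_
  ring

lemma eventually_log_le (C R : ℝ) :
    ∀ᶠ k : ℕ in atTop, R + C * Real.log (2 + ((k : ℝ) + 1)) ≤ ((k : ℝ) + 1) / 2 := by
  have h : (fun x : ℝ => (R + 1) + C * Real.log x) =o[atTop] (id : ℝ → ℝ) :=
    (Asymptotics.isLittleO_const_id_atTop (R + 1)).add (Real.isLittleO_log_id_atTop.const_mul_left C)
  have ht : Tendsto (fun k : ℕ => 2 + ((k : ℝ) + 1)) atTop atTop :=
    tendsto_atTop_add_const_left _ _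
      (tendsto_atTop_add_const_right _ _ tendsto_natCast_atTop_atTop)
  filter_upwards [ht.eventually (h.bound (c := 1 / 2) (by norm_num))] with k hk
  have hpos : (0 : ℝ) ≤ 2 + ((k : ℝ) + 1) := by positivity
  rw [id, Real.norm_of_nonneg hpos] at hk
  have := (Real.le_norm_self _).trans hk
  linarith

/-- Cancellation and lower bounds for the pair `y_{k+1}`, `y_{-(k+1)}`, uniform over the disc of
radius `R`. -/
lemma pair_bounds {C : ℝ} {y : ℤ → ℝ}
    (hb : ∀ k : ℤ, |y k - k| ≤ C * Real.log (2 + |(k : ℝ)|)) (R : ℝ) :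
    ∀ᶠ k : ℕ in atTop,
      ‖(y ((k : ℤ) + 1) : ℂ) + (y (-((k : ℤ) + 1)) : ℂ)‖ ≤ 2 * (C * Real.log (2 + ((k : ℝ) + 1))) ∧
      ∀ w : ℂ, ‖w‖ ≤ R → ((k : ℝ) + 1) / 2 ≤ ‖w - (y ((k : ℤ) + 1) : ℂ)‖ ∧
        ((k : ℝ) + 1) / 2 ≤ ‖w - (y (-((k : ℤ) + 1)) : ℂ)‖ := by
  filter_upwards [eventually_log_le C R] with k hk
  have hm : (0 : ℝ) < (k : ℝ) + 1 := by positivity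
  have ha := hb ((k : ℤ) + 1)
  have hb' := hb (-((k : ℤ) + 1))
  push_cast at ha hb'
  rw [abs_neg] at hb'
  rw [abs_of_pos hm] at ha hb'
  rw [abs_le] at ha hb'
  refine ⟨?_, fun w hw => ⟨?_, ?_⟩⟩
  · rw [← Complex.ofReal_add, Complex.norm_real, Real.norm_eq_abs, abs_le]
    constructor <;> linarith
  · have h := norm_sub_norm_le (y ((k : ℤ) + 1) : ℂ) w
    rw [norm_sub_rev, Complex.norm_real, Real.norm_eq_abs] at h
    have := le_abs_self (y ((k : ℤ) + 1))
    linarith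
  · have h := norm_sub_norm_le (y (-((k : ℤ) + 1)) : ℂ) w
    rw [norm_sub_rev, Complex.norm_real, Real.norm_eq_abs] at h
    have := neg_abs_le (y (-((k : ℤ) + 1)))
    linarith

lemma norm_div_mul_le {p a b : ℂ} {P m : ℝ} (hm : 0 < m) (hp : ‖p‖ ≤ P)
    (ha : m / 2 ≤ ‖a‖) (hb : m / 2 ≤ ‖b‖) : ‖p / (a * b)‖ ≤ 4 * P / m ^ 2 := by
  have hP : 0 ≤ P := (norm_nonneg _).trans hp
  rw [norm_div, norm_mul]
  calc ‖p‖ / (‖a‖ * ‖b‖) ≤ P / (m / 2 * (m / 2)) := by gcongr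
    _ = _ := by field_simp; ring

/-- The paired factor minus one. -/
noncomputable def pairTerm (y : ℤ → ℝ) (k : ℕ) (w : ℂ) : ℂ :=
  (1 - w / (y ((k : ℤ) + 1) : ℂ)) * (1 - w / (y (-((k : ℤ) + 1)) : ℂ)) - 1

lemma norm_pairTerm_le {C : ℝ} {y : ℤ → ℝ} (hy : ∀ k : ℤ, y k ≠ 0)
    (hb : ∀ k : ℤ, |y k - k| ≤ C * Real.log (2 + |(k : ℝ)|)) {R : ℝ} (hR : 0 ≤ R) :
    ∀ᶠ k : ℕ in atTop, ∀ w : ℂ, ‖w‖ ≤ R → ‖pairTerm y k w‖ ≤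
      (4 * R ^ 2 + 8 * R * C * Real.log (2 + ((k : ℝ) + 1))) / ((k : ℝ) + 1) ^ 2 := by
  filter_upwards [pair_bounds hb R] with k hk w hw
  obtain ⟨hs, hl⟩ := hk
  have h0 := hl 0 (by simpa using hR)
  rw [zero_sub, zero_sub, norm_neg, norm_neg] at h0
  have ha : (y ((k : ℤ) + 1) : ℂ) ≠ 0 := by exact_mod_cast hy _
  have hb0 : (y (-((k : ℤ) + 1)) : ℂ) ≠ 0 := by exact_mod_cast hy _
  have e : pairTerm y k w = (w ^ 2 - w * ((y ((k : ℤ) + 1) : ℂ) + (y (-((k : ℤ) + 1)) : ℂ))) /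
      ((y ((k : ℤ) + 1) : ℂ) * (y (-((k : ℤ) + 1)) : ℂ)) := by
    unfold pairTerm
    field_simp
    ring
  rw [e]
  refine (norm_div_mul_le (P := R ^ 2 + R * (2 * (C * Real.log (2 + ((k : ℝ) + 1)))))
    (by positivity) ?_ h0.1 h0.2).trans (le_of_eq (by ring))
  refine (norm_sub_le _ _).trans ?_
  rw [norm_pow, norm_mul]
  gcongr

/-- If `y : ℤ → ℝ` is nonvanishing with `|y_k − k| ≤ C log(2+|k|)`, then for every `z` outside
`{y_k : k ∈ ℤ}` the series `1/(z−y₀) + Σ_{k≥1} [1/(z−y_k) + 1/(z−y_{−k})]` converges and equals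
`ξ′(z)/ξ(z) − iπ`. -/
theorem stmt_6 (C : ℝ) (hC : 0 < C) (y : ℤ → ℝ) (hy : ∀ k : ℤ, y k ≠ 0)
    (hb : ∀ k : ℤ, |y k - k| ≤ C * Real.log (2 + |(k : ℝ)|))
    (z : ℂ) (hz : ∀ k : ℤ, z ≠ (y k : ℂ)) :
    Summable (fun k : ℕ =>
      1 / (z - (y ((k : ℤ) + 1) : ℂ)) + 1 / (z - (y (-((k : ℤ) + 1)) : ℂ))) ∧
    deriv (xiFun y) z / xiFun y z
      = Real.pi * Complex.I + 1 / (z - (y 0 : ℂ)) +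
          ∑' k : ℕ, (1 / (z - (y ((k : ℤ) + 1) : ℂ)) + 1 / (z - (y (-((k : ℤ) + 1)) : ℂ))) := by
  have hyc : ∀ k, (y k : ℂ) ≠ 0 := fun k => by exact_mod_cast hy k
  have hzs : ∀ k, z - (y k : ℂ) ≠ 0 := fun k => sub_ne_zero.2 (hz k)
  have hsum : Summable (fun k : ℕ =>
      1 / (z - (y ((k : ℤ) + 1) : ℂ)) + 1 / (z - (y (-((k : ℤ) + 1)) : ℂ))) := by
    refine (summable_log_div_sq (8 * ‖z‖) (8 * C)).of_norm_bounded_eventually_nat ?_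
    filter_upwards [pair_bounds hb ‖z‖] with k hk
    have hl := hk.2 z le_rfl
    have e : 1 / (z - (y ((k : ℤ) + 1) : ℂ)) + 1 / (z - (y (-((k : ℤ) + 1)) : ℂ)) =
        (2 * z - ((y ((k : ℤ) + 1) : ℂ) + (y (-((k : ℤ) + 1)) : ℂ))) /
          ((z - (y ((k : ℤ) + 1) : ℂ)) * (z - (y (-((k : ℤ) + 1)) : ℂ))) := by
      rw [div_add_div _ _ (hzs _) (hzs _)]
      ring
    rw [e]
    refine (norm_div_mul_le (P := 2 * ‖z‖ + 2 * (C * Real.log (2 + ((k : ℝ) + 1))))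
      (by positivity) ?_ hl.1 hl.2).trans (le_of_eq (by ring))
    refine (norm_sub_le _ _).trans ?_
    rw [norm_mul, Complex.norm_ofNat]
    exact add_le_add le_rfl hk.1
  refine ⟨hsum, ?_⟩
  have hR : (0 : ℝ) ≤ ‖z‖ + 1 := by positivity
  have hfac : ∀ k, 1 - z / (y k : ℂ) ≠ 0 := fun k h => by
    apply hz k
    have := hyc k
    rw [sub_eq_zero, eq_div_iff this, one_mul] at h
    exact h.symm
  have hlin : ∀ k, logDeriv (fun w : ℂ => 1 - w / (y k : ℂ)) z = 1 / (z - (y k : ℂ)) := fun k => by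
    have h1 := hyc k
    have hd : HasDerivAt (fun w : ℂ => 1 - w / (y k : ℂ)) (-(1 / (y k : ℂ))) z :=
      ((hasDerivAt_id z).div_const _).const_sub 1
    rw [logDeriv_apply, hd.deriv, div_eq_div_iff (hfac k) (hzs k)]
    field_simp
    ring
  have hmul : MultipliableLocallyUniformlyOn (fun k w => 1 + pairTerm y k w)
      (Metric.ball (0 : ℂ) (‖z‖ + 1)) := by
    refine Summable.multipliableLocallyUniformlyOn_nat_one_add Metric.isOpen_ball
      (summable_log_div_sq (4 * (‖z‖ + 1) ^ 2) (8 * (‖z‖ + 1) * C)) ?_ (fun k => ?_)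
    · filter_upwards [norm_pairTerm_le hy hb hR] with k hk w hw
      exact hk w (by simpa using (mem_ball_zero_iff.1 hw).le)
    · unfold pairTerm
      fun_prop
  have hnez : ∏' k, (1 + pairTerm y k z) ≠ 0 := by
    refine tprod_one_add_ne_zero_of_summable (fun k => ?_) ?_
    · simpa [pairTerm] using ⟨hfac ((k : ℤ) + 1), by simpa using hfac (-((k : ℤ) + 1))⟩
    · refine (summable_log_div_sq (4 * (‖z‖ + 1) ^ 2) (8 * (‖z‖ + 1) * C)).of_norm_bounded_eventually_nat ?_
      filter_upwards [norm_pairTerm_le hy hb hR] with k hk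
      simpa using hk z (by linarith)
  have heq : ∀ k, (fun w => 1 + pairTerm y k w) = fun w =>
      (1 - w / (y ((k : ℤ) + 1) : ℂ)) * (1 - w / (y (-((k : ℤ) + 1)) : ℂ)) := fun k => by
    funext w; simp [pairTerm]
  simp only [funext_iff] at heq
  simp only [heq] at hmul hnez
  have hzball : z ∈ Metric.ball (0 : ℂ) (‖z‖ + 1) := by simp
  have hterm : ∀ k : ℕ, logDeriv (fun w : ℂ =>
      (1 - w / (y ((k : ℤ) + 1) : ℂ)) * (1 - w / (y (-((k : ℤ) + 1)) : ℂ))) z =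
      1 / (z - (y ((k : ℤ) + 1) : ℂ)) + 1 / (z - (y (-((k : ℤ) + 1)) : ℂ)) := fun k => by
    rw [logDeriv_mul (f := fun w : ℂ => 1 - w / (y ((k : ℤ) + 1) : ℂ))
      (g := fun w : ℂ => 1 - w / (y (-((k : ℤ) + 1)) : ℂ)) z (hfac ((k : ℤ) + 1)) (hfac (-((k : ℤ) + 1))) (by fun_prop) (by fun_prop),
      hlin, hlin]
  have hprod := logDeriv_tprod_eq_tsum Metric.isOpen_ball hzball
    (f := fun (k : ℕ) (w : ℂ) =>
      (1 - w / (y ((k : ℤ) + 1) : ℂ)) * (1 - w / (y (-((k : ℤ) + 1)) : ℂ)))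
    (fun k => mul_ne_zero (hfac _) (hfac _)) (fun k => by fun_prop)
    (by simpa only [hterm] using hsum) hmul hnez
  simp only [hterm] at hprod
  have hdiff : DifferentiableAt ℂ (fun w : ℂ => ∏' k : ℕ,
      ((1 - w / (y ((k : ℤ) + 1) : ℂ)) * (1 - w / (y (-((k : ℤ) + 1)) : ℂ)))) z := by
    have h := hmul.hasProdLocallyUniformlyOn.differentiableOn
      (Eventually.of_forall fun s => by fun_prop) Metric.isOpen_ball
    exact h.differentiableAt (Metric.isOpen_ball.mem_nhds hzball)
  have hexp : logDeriv (fun w : ℂ => Complex.exp (Real.pi * Complex.I * w)) z =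
      Real.pi * Complex.I := by
    have hd : HasDerivAt (fun w : ℂ => Complex.exp (Real.pi * Complex.I * w))
        (Complex.exp (Real.pi * Complex.I * z) * (Real.pi * Complex.I * 1)) z :=
      ((hasDerivAt_id z).const_mul _).cexp
    rw [logDeriv_apply, hd.deriv, mul_one, mul_div_cancel_left₀ _ (Complex.exp_ne_zero _)]
  rw [← logDeriv_apply]
  unfold xiFun
  rw [logDeriv_mul (f := fun w : ℂ => Complex.exp (Real.pi * Complex.I * w) * (1 - w / (y 0 : ℂ)))
      z (mul_ne_zero (Complex.exp_ne_zero _) (hfac 0)) hnez (by fun_prop) hdiff,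
    logDeriv_mul (f := fun w : ℂ => Complex.exp (Real.pi * Complex.I * w))
      (g := fun w : ℂ => 1 - w / (y 0 : ℂ)) z (Complex.exp_ne_zero _) (hfac 0) (by fun_prop) (by fun_prop),
    hexp, hlin, hprod]
end

section
/- For every real p > 0 and every compact set K ⊂ ℂ with K ∩ ℝ = ∅, one has sup_{n ≥ 1} ∫_{U(n)} sup_{(z, z′) ∈ K × K} | det(I_n − U*·e^{2πiz′/n}) / det(I_n − U*·e^{2πiz/n}) |^p dμ_n(U) < ∞, where μ_n is the Haar probability measure on the unitary group U(n) and U* is the conjugate transpose of U. (For z with Im z ≠ 0 one has |e^{2πiz/n}| ≠ 1, so the denominator never vanishes and each integrand is a continuous function of U.) -/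
/-!
The ratio of characteristic polynomials is bounded by the exponential of a single linear statistic
of the eigenvalues, and that statistic has sub-Gaussian exponential moments, uniformly in the
dimension.

**Deterministic part** (`ratio_le`). Let `a` run over the eigenvalues of `U*` and put
`r = n / (n + 1)`. For `X = e^{2πiz/n}` and `X' = e^{2πiz'/n}` with `z, z' ∈ K`, the distances
`|X - X'|` and `|X - r|` are `O(1/n)` and `|1 - X a|` is at least a constant times `1/n`. Hence
`(1 - X' a) / (1 - X a)` equals `1 + (X - X') a / (1 - r a) + O(n⁻² |1 - r a|⁻²)`, so that its
modulus is at most the exponential of the real part of the middle term plus the error. By the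
Poisson kernel identity `(1 - r²) |1 - r a|⁻² = 1 + 2 Re (r a / (1 - r a))` both contributions are
controlled, after taking the product over `a`, by `q(U) = |n⁻¹ ∑ r a / (1 - r a)|`. The resulting
bound `exp (C (1 + q(U)))` does not depend on `z` and `z'`, which takes care of the supremum.

**Probabilistic part** (`lintegral_exp_le`). Expanding the geometric series, `q(U)` is the limit of
`|∑_{k < D} g_k tr U^{k+1}|` with `g_k = r^{k+1} / n ≥ 0`. For such sums
`E |∑ g_k tr U^{k+1}|^{2m} ≤ m! (∑ (k + 1) g_k²)^m` (`moment_le`), which is the value for independent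
complex Gaussians of variances `k + 1` in place of the traces. Summing over `m` gives exponential
moments, and `∑ (k + 1) g_k² ≤ 4` uniformly in `n` and `D`; Fatou's lemma lets `D → ∞`.

**The moment bound.** A product of traces of powers of total degree `d` is the trace of
`σ U^{⊗d}` for a permutation `σ` of cycle type given by the exponents. Products of different degrees
are orthogonal by invariance under scalars. In a fixed degree, averaging `X ↦ U^{⊗d} X (U^{⊗d})*`
projects onto the commutant of the operators `U^{⊗d}`, which is spanned by the permutation
operators (`mem_range_rep`, one half of Schur–Weyl duality). The second moment of
`∑ φ(σ) tr(σ U^{⊗d})`, for a class function `φ`, is therefore the trace of the nonnegative operator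
`X ↦ A X A*`, with `A = ∑ φ(σ) σ`, over the image of the group algebra of the symmetric group. It is
at most the trace over the group algebra itself, `d! ∑ |φ(σ)|²` (`second_moment_le`). No relation
between `d` and `n` is needed. It remains to count the permutations conjugating one cycle type to
another (`card_intertwiner_le`).
-/

open MeasureTheory

/-- Matrices carry the entrywise (product) σ-algebra. -/
instance matrixMeasurableSpace {m n α : Type*} [MeasurableSpace α] :
    MeasurableSpace (Matrix m n α) :=
  (inferInstance : MeasurableSpace (m → n → α))

/-! ### Tensor powers, permutation operators and density of the unitary group -/

namespace HaarRatio

set_option linter.unusedSectionVars false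

open Matrix Equiv
open scoped ComplexOrder

section Tensor

variable {n : ℕ} {ι : Type} [Fintype ι] [DecidableEq ι]

/-- The tensor power `A^{⊗ι}`, as a matrix indexed by multi-indices `ι → Fin n`. -/
def tpow (ι : Type) [Fintype ι] (A : Matrix (Fin n) (Fin n) ℂ) :
    Matrix (ι → Fin n) (ι → Fin n) ℂ :=
  Matrix.of fun i j => ∏ a, A (i a) (j a)

/-- The operator permuting the tensor factors of `(ℂⁿ)^{⊗ι}` by `σ`. -/
def permOp (n : ℕ) (σ : Perm ι) : Matrix (ι → Fin n) (ι → Fin n) ℂ :=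
  Matrix.of fun i j => if j = i ∘ σ then 1 else 0

theorem tpow_apply (A : Matrix (Fin n) (Fin n) ℂ) (i j : ι → Fin n) :
    tpow ι A i j = ∏ a, A (i a) (j a) := rfl

theorem tpow_mul (A B : Matrix (Fin n) (Fin n) ℂ) : tpow ι (A * B) = tpow ι A * tpow ι B := by
  ext i j
  simp only [tpow_apply, Matrix.mul_apply, Finset.prod_univ_sum, Fintype.piFinset_univ,
    Finset.prod_mul_distrib]

theorem tpow_conjTranspose (A : Matrix (Fin n) (Fin n) ℂ) : tpow ι Aᴴ = (tpow ι A)ᴴ := by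
  ext i j
  simp [tpow_apply, Matrix.conjTranspose_apply]

theorem tpow_smul (c : ℂ) (A : Matrix (Fin n) (Fin n) ℂ) :
    tpow ι (c • A) = c ^ Fintype.card ι • tpow ι A := by
  ext i j
  simp [tpow_apply, Finset.prod_mul_distrib]

theorem tpow_one : tpow ι (1 : Matrix (Fin n) (Fin n) ℂ) = 1 := by
  ext i j
  simp only [tpow_apply, Matrix.one_apply, Finset.prod_ite_zero]
  simp [funext_iff]

theorem permOp_mul_apply (σ : Perm ι) (X : Matrix (ι → Fin n) (ι → Fin n) ℂ) (i j : ι → Fin n) :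
    (permOp n σ * X) i j = X (i ∘ σ) j := by
  simp [permOp, Matrix.mul_apply]

theorem mul_permOp_apply (σ : Perm ι) (X : Matrix (ι → Fin n) (ι → Fin n) ℂ) (i j : ι → Fin n) :
    (X * permOp n σ) i j = X i (j ∘ σ.symm) := by
  have h : ∀ x : ι → Fin n, j = x ∘ σ ↔ x = j ∘ σ.symm := by
    intro x
    constructor
    · rintro rfl; ext a; simp
    · rintro rfl; ext a; simp
  simp [permOp, Matrix.mul_apply, h]

theorem permOp_mul (σ τ : Perm ι) : permOp n (σ * τ) = permOp n σ * permOp n τ := by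
  ext i j
  rw [permOp_mul_apply]
  rfl

theorem permOp_one : permOp n (1 : Perm ι) = 1 := by
  ext i j
  simp [permOp, Matrix.one_apply, eq_comm]

theorem permOp_conjTranspose (σ : Perm ι) : (permOp n σ)ᴴ = permOp n σ⁻¹ := by
  ext i j
  have h : i = j ∘ σ ↔ j = i ∘ (σ⁻¹ : Perm ι) := by
    constructor
    · rintro rfl; ext a; simp
    · rintro rfl; ext a; simp
  simp [permOp, Matrix.conjTranspose_apply, h, apply_ite]

theorem permOp_commute_tpow (σ : Perm ι) (A : Matrix (Fin n) (Fin n) ℂ) :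
    permOp n σ * tpow ι A = tpow ι A * permOp n σ := by
  ext i j
  rw [permOp_mul_apply, mul_permOp_apply, tpow_apply, tpow_apply]
  exact Fintype.prod_equiv σ _ _ (by simp)

/-- `tr(σ A^{⊗ι})` is a product of traces of powers of `A`, one for each cycle of `σ`; here it is
written out in coordinates. -/
theorem trace_permOp_tpow (σ : Perm ι) (A : Matrix (Fin n) (Fin n) ℂ) :
    (permOp n σ * tpow ι A).trace = ∑ i : ι → Fin n, ∏ a, A (i (σ a)) (i a) := by
  simp [Matrix.trace, permOp_mul_apply, tpow_apply]

theorem differentiable_det {F : ℂ → Matrix (Fin n) (Fin n) ℂ}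
    (hF : ∀ i j, Differentiable ℂ fun z => F z i j) : Differentiable ℂ fun z => (F z).det := by
  simp only [Matrix.det_apply]
  fun_prop

theorem differentiable_adjugate {F : ℂ → Matrix (Fin n) (Fin n) ℂ}
    (hF : ∀ i j, Differentiable ℂ fun z => F z i j) (k l : Fin n) :
    Differentiable ℂ fun z => (F z).adjugate k l := by
  simp only [Matrix.adjugate_apply]
  refine differentiable_det fun i j => ?_
  simp only [Matrix.updateRow_apply]
  by_cases h : i = l
  · simp [h]
  · simpa [h] using hF i j

/-- The Cayley transform of a skew-Hermitian matrix is unitary. Replacing the inverse by the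
adjugate only changes it by a scalar, and makes it polynomial in the matrix. -/
theorem commute_cayley {B : Matrix (ι → Fin n) (ι → Fin n) ℂ}
    (hB : ∀ U ∈ Matrix.unitaryGroup (Fin n) ℂ, Commute B (tpow ι U))
    {X : Matrix (Fin n) (Fin n) ℂ} (hX : Xᴴ = -X) :
    Commute B (tpow ι ((1 + X) * (1 - X).adjugate)) := by
  have hdet : (1 - X).det ≠ 0 := by
    have hp : (1 + Xᴴ * X).PosDef :=
      Matrix.PosDef.one.add_posSemidef (Matrix.posSemidef_conjTranspose_mul_self X)
    have h1 : 1 + Xᴴ * X = (1 + X) * (1 - X) := by rw [hX]; noncomm_ring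
    have h2 := hp.det_pos.ne'
    rw [h1, Matrix.det_mul] at h2
    exact right_ne_zero_of_mul h2
  have hu : IsUnit (1 - X).det := isUnit_iff_ne_zero.mpr hdet
  have hU : (1 + X) * (1 - X)⁻¹ ∈ Matrix.unitaryGroup (Fin n) ℂ := by
    rw [Matrix.mem_unitaryGroup_iff']
    have e1 : star ((1 + X) * (1 - X)⁻¹) = (1 + X)⁻¹ * (1 - X) := by
      rw [Matrix.star_eq_conjTranspose, Matrix.conjTranspose_mul, Matrix.conjTranspose_nonsing_inv]
      simp [hX, sub_eq_add_neg]
    have hdet' : IsUnit (1 + X).det := by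
      have : (1 + X) = (1 - X)ᴴ := by simp [hX]
      rw [this, Matrix.det_conjTranspose]
      exact hu.star
    have e2 : (1 - X) * (1 + X) = (1 + X) * (1 - X) := by noncomm_ring
    rw [e1]
    calc (1 + X)⁻¹ * (1 - X) * ((1 + X) * (1 - X)⁻¹)
        = (1 + X)⁻¹ * ((1 - X) * (1 + X)) * (1 - X)⁻¹ := by simp only [Matrix.mul_assoc]
      _ = ((1 + X)⁻¹ * (1 + X)) * ((1 - X) * (1 - X)⁻¹) := by rw [e2]; simp only [Matrix.mul_assoc]
      _ = 1 := by rw [Matrix.nonsing_inv_mul _ hdet', Matrix.mul_nonsing_inv _ hu, Matrix.mul_one]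
  have hadj : (1 + X) * (1 - X).adjugate = (1 - X).det • ((1 + X) * (1 - X)⁻¹) := by
    rw [Matrix.inv_def, Matrix.mul_smul, smul_smul, Ring.mul_inverse_cancel _ hu, one_smul]
  rw [hadj, tpow_smul]
  exact (hB _ hU).smul_right _

/-- Zariski density of `U(n)` in the `n × n` matrices, in the form needed here: whatever commutes
with all `U^{⊗ι}` commutes with all `A^{⊗ι}`. -/
theorem commute_tpow_of_unitary {B : Matrix (ι → Fin n) (ι → Fin n) ℂ}
    (hB : ∀ U ∈ Matrix.unitaryGroup (Fin n) ℂ, Commute B (tpow ι U))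
    (A : Matrix (Fin n) (Fin n) ℂ) : Commute B (tpow ι A) := by
  -- the Cayley transform of an arbitrary matrix, by analytic continuation from skew-Hermitian ones
  have key : ∀ X : Matrix (Fin n) (Fin n) ℂ,
      Commute B (tpow ι ((1 + X) * (1 - X).adjugate)) := by
    intro X
    set X₁ : Matrix (Fin n) (Fin n) ℂ := (1 / 2 : ℂ) • (X - Xᴴ) with hX₁
    set X₂ : Matrix (Fin n) (Fin n) ℂ := (-Complex.I / 2) • (X + Xᴴ) with hX₂
    have hX : X = X₁ + Complex.I • X₂ := by
      ext i j
      simp only [hX₁, hX₂, Matrix.add_apply, Matrix.smul_apply, Matrix.sub_apply, smul_eq_mul]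
      linear_combination ((X i j + Xᴴ i j) / 2) * Complex.I_mul_I
    have s₁ : X₁ᴴ = -X₁ := by
      ext i j
      simp [hX₁, Matrix.conjTranspose_apply]; ring
    have s₂ : X₂ᴴ = -X₂ := by
      ext i j
      simp [hX₂, Matrix.conjTranspose_apply]; ring
    set F : ℂ → Matrix (Fin n) (Fin n) ℂ := fun z =>
      (1 + (X₁ + z • X₂)) * (1 - (X₁ + z • X₂)).adjugate with hF
    have hFd : ∀ i j, Differentiable ℂ fun z => F z i j := by
      intro i j
      simp only [hF, Matrix.mul_apply]
      refine Differentiable.fun_sum fun k _ => ?_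
      refine Differentiable.mul ?_ (differentiable_adjugate (fun a b => ?_) k j)
      · simp only [Matrix.add_apply, Matrix.smul_apply, smul_eq_mul]; fun_prop
      · simp only [Matrix.add_apply, Matrix.sub_apply, Matrix.smul_apply, smul_eq_mul]; fun_prop
    have hz : ∀ z : ℂ, B * tpow ι (F z) = tpow ι (F z) * B := by
      intro z
      ext k l
      have hd : Differentiable ℂ fun z => (B * tpow ι (F z) - tpow ι (F z) * B) k l := by
        simp only [Matrix.sub_apply, Matrix.mul_apply, tpow_apply]
        fun_prop
      have h0 : ∀ t : ℝ, (B * tpow ι (F t) - tpow ι (F t) * B) k l = 0 := by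
        intro t
        have : Commute B (tpow ι (F t)) := by
          apply commute_cayley hB
          ext i j
          have a1 := congrFun (congrFun s₁ i) j
          have a2 := congrFun (congrFun s₂ i) j
          simp only [Matrix.conjTranspose_apply, Matrix.neg_apply, Matrix.add_apply,
            Matrix.smul_apply, smul_eq_mul, star_add, star_mul'] at a1 a2 ⊢
          rw [a1, a2]; simp; ring
        rw [this.eq, sub_self]; rfl
      have hana : AnalyticOnNhd ℂ (fun z => (B * tpow ι (F z) - tpow ι (F z) * B) k l)
          Set.univ := hd.differentiableOn.analyticOnNhd isOpen_univ
      have hfreq : ∃ᶠ w in nhdsWithin (0 : ℂ) {0}ᶜ,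
          (B * tpow ι (F w) - tpow ι (F w) * B) k l = 0 := by
        have ht : Filter.Tendsto (fun m : ℕ => ((1 / ((m : ℝ) + 1) : ℝ) : ℂ)) Filter.atTop
            (nhdsWithin (0 : ℂ) {0}ᶜ) := by
          rw [tendsto_nhdsWithin_iff]
          constructor
          · have := tendsto_one_div_add_atTop_nhds_zero_nat (𝕜 := ℝ)
            exact_mod_cast (Complex.continuous_ofReal.tendsto 0).comp this
          · refine Filter.Eventually.of_forall fun m => ?_
            have : (1 / ((m : ℝ) + 1) : ℝ) ≠ 0 := by positivity
            simpa using (Complex.ofReal_ne_zero.mpr this)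
        exact ht.frequently (Filter.Frequently.of_forall fun m => h0 _)
      have := hana.eqOn_zero_of_preconnected_of_frequently_eq_zero isPreconnected_univ
        (Set.mem_univ 0) hfreq (Set.mem_univ z)
      simpa [sub_eq_zero] using this
    have := hz Complex.I
    rw [hF] at this
    simp only [← hX] at this
    exact this
  -- matrices `A` with `1 + A` invertible are Cayley transforms up to a scalar
  have key2 : ∀ A : Matrix (Fin n) (Fin n) ℂ, (1 + A).det ≠ 0 → Commute B (tpow ι A) := by
    intro A hA
    have hu : IsUnit (1 + A).det := isUnit_iff_ne_zero.mpr hA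
    set X := (A - 1) * (1 + A)⁻¹ with hX
    have e1 : 1 + X = (2 : ℂ) • (A * (1 + A)⁻¹) := by
      have : (1 : Matrix (Fin n) (Fin n) ℂ) = (1 + A) * (1 + A)⁻¹ :=
        (Matrix.mul_nonsing_inv _ hu).symm
      rw [hX]; nth_rw 1 [this]
      rw [← Matrix.add_mul, ← Matrix.smul_mul]; congr 1; rw [two_smul]; abel
    have e2 : 1 - X = (2 : ℂ) • (1 + A)⁻¹ := by
      have : (1 : Matrix (Fin n) (Fin n) ℂ) = (1 + A) * (1 + A)⁻¹ :=
        (Matrix.mul_nonsing_inv _ hu).symm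
      rw [hX]; nth_rw 1 [this]
      rw [← Matrix.sub_mul]
      have : (1 + A) - (A - 1) = (2 : ℂ) • (1 : Matrix (Fin n) (Fin n) ℂ) := by
        rw [two_smul]; abel
      rw [this, Matrix.smul_mul, Matrix.one_mul]
    have hdet : (1 - X).det ≠ 0 := by
      rw [e2, Matrix.det_smul]
      refine mul_ne_zero (by simp) ?_
      exact (Matrix.isUnit_nonsing_inv_det _ hu).ne_zero
    have e3 : (1 + X) * (1 - X).adjugate = (1 - X).det • A := by
      have h4 : 1 + X = A * (1 - X) := by rw [e1, e2, Matrix.mul_smul]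
      rw [h4, Matrix.mul_assoc, Matrix.mul_adjugate, Matrix.mul_smul, Matrix.mul_one]
    have h := key X
    rw [e3, tpow_smul] at h
    have hne : (1 - X).det ^ Fintype.card ι ≠ 0 := pow_ne_zero _ hdet
    have h5 := h.smul_right ((1 - X).det ^ Fintype.card ι)⁻¹
    rwa [smul_smul, inv_mul_cancel₀ hne, one_smul] at h5
  -- a small multiple `t • A` has `1 + t • A` invertible
  have hex : ∃ t : ℂ, t ≠ 0 ∧ (1 + t • A).det ≠ 0 := by
    have hd : Continuous fun t : ℂ => (1 + t • A).det :=
      (differentiable_det (F := fun t => 1 + t • A) (by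
        intro i j
        simp only [Matrix.add_apply, Matrix.smul_apply, smul_eq_mul]; fun_prop)).continuous
    have h0 : ∀ᶠ t in nhds (0 : ℂ), (1 + t • A).det ≠ 0 :=
      hd.continuousAt.eventually_ne (by simp)
    obtain ⟨t, ht, ht'⟩ := ((h0.filter_mono nhdsWithin_le_nhds).and
      (eventually_mem_nhdsWithin (a := (0 : ℂ)) (s := {0}ᶜ))).exists
    exact ⟨t, by simpa using ht', ht⟩
  obtain ⟨t, ht, hA⟩ := hex
  have h := key2 _ hA
  rw [tpow_smul] at h
  have hne : t ^ Fintype.card ι ≠ 0 := pow_ne_zero _ ht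
  have h5 := h.smul_right (t ^ Fintype.card ι)⁻¹
  rwa [smul_smul, inv_mul_cancel₀ hne, one_smul] at h5

end Tensor

end HaarRatio

/-! ### The commutant of the tensor powers of unitary matrices -/

namespace HaarRatio

set_option linter.unusedSectionVars false

open Matrix Equiv
open scoped ComplexOrder

section Bicommutant

variable {n : ℕ} {ι : Type} [Fintype ι] [DecidableEq ι]

/-- Inclusion–exclusion extracts the multilinear part of a product of linear forms. -/
theorem polarization (x : ι → ι → ℂ) :
    ∑ T : Finset ι, (-1 : ℂ) ^ Tᶜ.card * ∏ a, ∑ c ∈ T, x c a =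
      ∑ σ : Perm ι, ∏ a, x (σ a) a := by
  have h1 : ∀ T : Finset ι, ∏ a, ∑ c ∈ T, x c a =
      ∑ g : ι → ι, if Finset.univ.image g ⊆ T then ∏ a, x (g a) a else 0 := by
    intro T
    rw [Finset.prod_univ_sum, ← Finset.sum_filter]
    refine Finset.sum_congr ?_ fun _ _ => rfl
    ext g
    simp [Fintype.mem_piFinset, Finset.image_subset_iff]
  have h2 : ∀ g : ι → ι, ∑ T : Finset ι, (-1 : ℂ) ^ Tᶜ.card *
      (if Finset.univ.image g ⊆ T then ∏ a, x (g a) a else 0) =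
      if Function.Bijective g then ∏ a, x (g a) a else 0 := by
    intro g
    have h3 : ∑ T : Finset ι, (-1 : ℂ) ^ Tᶜ.card *
        (if Finset.univ.image g ⊆ T then ∏ a, x (g a) a else 0) =
        (∑ S ∈ (Finset.univ.image g)ᶜ.powerset, (-1 : ℂ) ^ S.card) * ∏ a, x (g a) a := by
      rw [Finset.sum_mul]
      simp only [mul_ite, mul_zero]
      rw [← Finset.sum_filter]
      refine Finset.sum_bij' (fun T _ => Tᶜ) (fun S _ => Sᶜ) ?_ ?_ ?_ ?_ ?_
      · intro T hT
        simpa [Finset.mem_powerset, Finset.compl_subset_compl] using hT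
      · intro S hS
        rw [Finset.mem_powerset] at hS
        rw [Finset.mem_filter]
        exact ⟨Finset.mem_univ _, by
          rw [← compl_compl (Finset.univ.image g)]
          exact Finset.compl_subset_compl.mpr hS⟩
      · intro T _; simp
      · intro S _; simp
      · intro T _; rfl
    have h4 : (∑ S ∈ (Finset.univ.image g)ᶜ.powerset, (-1 : ℂ) ^ S.card) =
        if (Finset.univ.image g)ᶜ = ∅ then 1 else 0 := by
      have := Finset.sum_powerset_neg_one_pow_card (x := (Finset.univ.image g)ᶜ)
      have := congrArg (Int.cast : ℤ → ℂ) this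
      push_cast at this
      exact this
    have h5 : (Finset.univ.image g)ᶜ = ∅ ↔ Function.Bijective g := by
      have h6 : Finset.univ.image g = Finset.univ ↔ Function.Surjective g := by
        rw [← Finset.coe_inj]; simp [Set.range_eq_univ]
      rw [Finset.compl_eq_empty_iff, h6]
      exact ⟨fun h => ⟨Finite.injective_iff_surjective.mpr h, h⟩, fun h => h.2⟩
    rw [h3, h4]
    simp [h5]
  simp_rw [h1, Finset.mul_sum]
  rw [Finset.sum_comm]
  simp_rw [h2]
  rw [← Finset.sum_filter]
  symm
  refine Finset.sum_bij (fun σ _ => ⇑σ) ?_ ?_ ?_ ?_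
  · intro σ _; simp
  · intro σ _ τ _ h; exact Equiv.coe_fn_injective h
  · intro g hg
    exact ⟨Equiv.ofBijective g (by simpa using hg), Finset.mem_univ _, rfl⟩
  · intro σ _; rfl

/-- The symmetrization `∑_σ σ E_{ij} σ⁻¹` of a matrix unit of `(ℂⁿ)^{⊗ι}`. -/
def symUnit (i j : ι → Fin n) : Matrix (ι → Fin n) (ι → Fin n) ℂ :=
  ∑ σ : Perm ι, permOp n σ * Matrix.single i j 1 * permOp n σ⁻¹

theorem symUnit_apply (i j k l : ι → Fin n) :
    symUnit i j k l = ∑ σ : Perm ι, if i = k ∘ σ ∧ j = l ∘ σ then 1 else 0 := by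
  simp only [symUnit, Matrix.sum_apply, mul_permOp_apply, permOp_mul_apply, Matrix.single_apply]
  rfl

/-- By polarization, symmetrized matrix units are linear combinations of tensor powers. -/
theorem symUnit_eq (i j : ι → Fin n) :
    symUnit i j = ∑ T : Finset ι, (-1 : ℂ) ^ Tᶜ.card •
      tpow ι (∑ c ∈ T, Matrix.single (i c) (j c) 1) := by
  ext k l
  simp only [symUnit_apply, Matrix.sum_apply, Matrix.smul_apply, tpow_apply, smul_eq_mul]
  rw [polarization fun c a => Matrix.single (i c) (j c) (1 : ℂ) (k a) (l a)]
  refine Fintype.sum_equiv (Equiv.inv (Perm ι)) _ _ fun σ => ?_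
  simp only [Matrix.single_apply, Finset.prod_ite_zero, Finset.prod_const_one, Equiv.inv_apply]
  refine if_congr ?_ rfl rfl
  simp only [funext_iff, Function.comp_apply, Finset.mem_univ, true_imp_iff, forall_and]
  constructor
  · rintro ⟨h1, h2⟩
    exact ⟨fun a => by simpa using h1 (σ⁻¹ a), fun a => by simpa using h2 (σ⁻¹ a)⟩
  · rintro ⟨h1, h2⟩
    exact ⟨fun a => by simpa using h1 (σ a), fun a => by simpa using h2 (σ a)⟩

theorem commute_symUnit {B : Matrix (ι → Fin n) (ι → Fin n) ℂ}
    (hB : ∀ A : Matrix (Fin n) (Fin n) ℂ, Commute B (tpow ι A)) (i j : ι → Fin n) :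
    Commute B (symUnit i j) := by
  rw [symUnit_eq]
  exact Commute.sum_right _ _ _ fun T _ => (hB _).smul_right _

theorem symUnit_conjTranspose (i j : ι → Fin n) :
    (symUnit i j)ᴴ = ∑ σ : Perm ι, permOp n σ * Matrix.single j i 1 * permOp n σ⁻¹ := by
  simp [symUnit, Matrix.conjTranspose_sum, Matrix.conjTranspose_mul, permOp_conjTranspose,
    Matrix.mul_assoc]

/-- The representation of the group algebra of `Perm ι` on `(ℂⁿ)^{⊗ι}`. -/
def rep (n : ℕ) (ι : Type) [Fintype ι] [DecidableEq ι] :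
    (Perm ι → ℂ) →ₗ[ℂ] Matrix (ι → Fin n) (ι → Fin n) ℂ where
  toFun x := ∑ σ, x σ • permOp n σ
  map_add' x y := by simp [add_smul, Finset.sum_add_distrib]
  map_smul' c x := by simp [Finset.smul_sum, smul_smul]

theorem rep_apply (x : Perm ι → ℂ) : rep n ι x = ∑ σ, x σ • permOp n σ := rfl

theorem permOp_mem_range (σ : Perm ι) : permOp n σ ∈ LinearMap.range (rep n ι) :=
  ⟨Pi.single σ 1, by simp [rep_apply, Pi.single_apply, ite_smul]⟩

theorem rep_commute_tpow (x : Perm ι → ℂ) (A : Matrix (Fin n) (Fin n) ℂ) :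
    Commute (rep n ι x) (tpow ι A) := by
  rw [rep_apply]
  exact Commute.sum_left _ _ _ fun σ _ => Commute.smul_left (permOp_commute_tpow σ A) _

/-- The map `Y ↦ ∑_{i,j} S_{ij} Y S_{ij}ᴴ`, where `S_{ij}` are the symmetrized matrix units. -/
def twirl (n : ℕ) (ι : Type) [Fintype ι] [DecidableEq ι] :
    Matrix (ι → Fin n) (ι → Fin n) ℂ →ₗ[ℂ] Matrix (ι → Fin n) (ι → Fin n) ℂ where
  toFun Y := ∑ i, ∑ j, symUnit i j * Y * (symUnit i j)ᴴ
  map_add' x y := by simp [Matrix.mul_add, Matrix.add_mul, Finset.sum_add_distrib]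
  map_smul' c x := by simp [Finset.smul_sum]

theorem twirl_apply (Y : Matrix (ι → Fin n) (ι → Fin n) ℂ) :
    twirl n ι Y = ∑ i, ∑ j, symUnit i j * Y * (symUnit i j)ᴴ := rfl

theorem sum_single_mul_mul_single {κ : Type} [Fintype κ] [DecidableEq κ] (Y : Matrix κ κ ℂ) :
    ∑ i, ∑ j, Matrix.single i j 1 * Y * Matrix.single j i 1 = Y.trace • (1 : Matrix κ κ ℂ) := by
  have h : ∀ i j, Matrix.single i j 1 * Y * Matrix.single j i 1 = Y j j • Matrix.single i i 1 := by
    intro i j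
    simp
  simp_rw [h, ← Finset.sum_smul, ← Finset.smul_sum]
  congr 1
  ext a b
  simp [Matrix.sum_apply, Matrix.single_apply, Matrix.one_apply, ite_and]

/-- Summing over all matrix units turns `Y` into scalars, so only permutation operators remain. -/
theorem twirl_mem_range (Y : Matrix (ι → Fin n) (ι → Fin n) ℂ) :
    twirl n ι Y ∈ LinearMap.range (rep n ι) := by
  have h : twirl n ι Y = ∑ σ : Perm ι, ∑ τ : Perm ι,
      (permOp n σ⁻¹ * Y * permOp n τ).trace • permOp n (σ * τ⁻¹) := by
    rw [twirl_apply]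
    have h1 : ∀ i j : ι → Fin n, symUnit i j * Y * (symUnit i j)ᴴ =
        ∑ σ : Perm ι, ∑ τ : Perm ι, permOp n σ *
          (Matrix.single i j 1 * (permOp n σ⁻¹ * Y * permOp n τ) * Matrix.single j i 1) *
          permOp n τ⁻¹ := by
      intro i j
      rw [symUnit_conjTranspose, symUnit]
      simp only [Finset.sum_mul, Finset.mul_sum, Matrix.mul_assoc]
      rw [Finset.sum_comm]
    simp_rw [h1]
    have h2 : ∀ F : (ι → Fin n) → (ι → Fin n) → Perm ι → Perm ι →
        Matrix (ι → Fin n) (ι → Fin n) ℂ,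
        ∑ i, ∑ j, ∑ σ, ∑ τ, F i j σ τ = ∑ σ, ∑ τ, ∑ i, ∑ j, F i j σ τ := by
      intro F
      calc ∑ i, ∑ j, ∑ σ, ∑ τ, F i j σ τ = ∑ i, ∑ σ, ∑ j, ∑ τ, F i j σ τ :=
            Finset.sum_congr rfl fun i _ => Finset.sum_comm
        _ = ∑ σ, ∑ i, ∑ j, ∑ τ, F i j σ τ := Finset.sum_comm
        _ = ∑ σ, ∑ i, ∑ τ, ∑ j, F i j σ τ := by
            refine Finset.sum_congr rfl fun σ _ => Finset.sum_congr rfl fun i _ => Finset.sum_comm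
        _ = ∑ σ, ∑ τ, ∑ i, ∑ j, F i j σ τ :=
            Finset.sum_congr rfl fun σ _ => Finset.sum_comm
    rw [h2]
    refine Finset.sum_congr rfl fun σ _ => Finset.sum_congr rfl fun τ _ => ?_
    simp_rw [← Finset.sum_mul, ← Finset.mul_sum]
    rw [sum_single_mul_mul_single, permOp_mul]
    simp
  rw [h]
  exact Submodule.sum_mem _ fun σ _ => Submodule.sum_mem _ fun τ _ =>
    Submodule.smul_mem _ _ (permOp_mem_range _)

/-- On the commutant, `twirl Y * Yᴴ` is a sum of positive matrices `(Y S_{ij}) (Y S_{ij})ᴴ`, so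
`twirl` is injective there. -/
theorem twirl_eq_zero {Y : Matrix (ι → Fin n) (ι → Fin n) ℂ}
    (hY : ∀ A : Matrix (Fin n) (Fin n) ℂ, Commute Y (tpow ι A)) (h : twirl n ι Y = 0) :
    Y = 0 := by
  have h1 : ∑ i, ∑ j, (Y * symUnit i j) * (Y * symUnit i j)ᴴ = 0 := by
    have : twirl n ι Y * Yᴴ = 0 := by rw [h, Matrix.zero_mul]
    rw [twirl_apply] at this
    simp_rw [Finset.sum_mul] at this
    rw [← this]
    refine Finset.sum_congr rfl fun i _ => Finset.sum_congr rfl fun j _ => ?_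
    rw [← (commute_symUnit hY i j).eq, Matrix.conjTranspose_mul]
    simp only [Matrix.mul_assoc]
  have hnn : ∀ M : Matrix (ι → Fin n) (ι → Fin n) ℂ, 0 ≤ (M * Mᴴ).trace := fun M =>
    (Matrix.posSemidef_self_mul_conjTranspose M).trace_nonneg
  have h2 : ∀ i j, Y * symUnit i j = 0 := by
    have h3 := congrArg Matrix.trace h1
    simp only [Matrix.trace_sum, Matrix.trace_zero] at h3
    intro i j
    have h4 := (Finset.sum_eq_zero_iff_of_nonneg
      (fun i _ => Finset.sum_nonneg fun j _ => hnn _)).mp h3 i (Finset.mem_univ _)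
    have h5 := (Finset.sum_eq_zero_iff_of_nonneg (fun j _ => hnn _)).mp h4 j (Finset.mem_univ _)
    exact Matrix.trace_mul_conjTranspose_self_eq_zero_iff.mp h5
  ext k i
  -- `S_{ii}` is diagonal, with the order of the stabilizer of `i` as its `(i, i)` entry
  have h3 := congrFun (congrFun (h2 i i) k) i
  have h4 : (Y * symUnit i i) k i = Y k i * symUnit i i i i := by
    rw [Matrix.mul_apply]
    refine Finset.sum_eq_single i (fun l _ hl => ?_) (by simp)
    rw [symUnit_apply]
    have : ∀ σ : Perm ι, ¬ (i = l ∘ σ ∧ i = i ∘ σ) := by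
      rintro σ ⟨ha, hb⟩
      apply hl
      have : l ∘ σ = i ∘ σ := ha.symm.trans hb
      exact (σ.surjective.injective_comp_right this)
    simp [this]
  have h5 : symUnit i i i i ≠ 0 := by
    rw [symUnit_apply, Finset.sum_boole, Nat.cast_ne_zero, Finset.card_ne_zero]
    exact ⟨1, by simp⟩
  rw [h4] at h3
  simpa [h5] using h3

/-- The commutant of the operators `U^{⊗ι}`, `U ∈ U(n)`, is spanned by permutations. -/
theorem mem_range_rep {B : Matrix (ι → Fin n) (ι → Fin n) ℂ}
    (hB : ∀ U ∈ Matrix.unitaryGroup (Fin n) ℂ, Commute B (tpow ι U)) :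
    B ∈ LinearMap.range (rep n ι) := by
  have hB' := commute_tpow_of_unitary hB
  set T : LinearMap.range (rep n ι) →ₗ[ℂ] LinearMap.range (rep n ι) :=
    ((twirl n ι).domRestrict _).codRestrict _ (fun Y => twirl_mem_range _) with hT
  have hinj : Function.Injective T := by
    rw [injective_iff_map_eq_zero]
    rintro ⟨Y, x, rfl⟩ hY
    have : twirl n ι (rep n ι x) = 0 := congrArg Subtype.val hY
    exact Subtype.ext (twirl_eq_zero (rep_commute_tpow x) this)
  obtain ⟨⟨Y, x, rfl⟩, hY⟩ := (LinearMap.injective_iff_surjective.mp hinj)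
    ⟨twirl n ι B, twirl_mem_range B⟩
  have h1 : twirl n ι (rep n ι x) = twirl n ι B := congrArg Subtype.val hY
  have h2 : twirl n ι (B - rep n ι x) = 0 := by rw [map_sub, h1, sub_self]
  have h3 := twirl_eq_zero (fun A => (hB' A).sub_left (rep_commute_tpow x A)) h2
  exact ⟨x, (sub_eq_zero.mp h3).symm⟩

end Bicommutant

end HaarRatio

/-! ### Second moments of class functions of permutations -/

namespace HaarRatio

set_option linter.unusedSectionVars false

open Matrix Equiv
open scoped ComplexOrder

section Haar

variable {n : ℕ} {ι : Type} [Fintype ι] [DecidableEq ι]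

theorem measurable_entry (i j : Fin n) :
    Measurable fun U : Matrix.unitaryGroup (Fin n) ℂ => (U : Matrix (Fin n) (Fin n) ℂ) i j :=
  (measurable_pi_apply j).comp ((measurable_pi_apply i).comp measurable_subtype_coe)

theorem measurable_tpow (i j : ι → Fin n) :
    Measurable fun U : Matrix.unitaryGroup (Fin n) ℂ =>
      tpow ι (U : Matrix (Fin n) (Fin n) ℂ) i j := by
  simp only [tpow_apply]
  exact Finset.measurable_prod _ fun a _ => measurable_entry _ _

theorem norm_tpow_le (U : Matrix.unitaryGroup (Fin n) ℂ) (i j : ι → Fin n) :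
    ‖tpow ι (U : Matrix (Fin n) (Fin n) ℂ) i j‖ ≤ 1 := by
  rw [tpow_apply, norm_prod]
  exact Finset.prod_le_one (fun _ _ => norm_nonneg _)
    fun a _ => entry_norm_bound_of_unitary U.2 _ _

variable (μ : Measure (Matrix.unitaryGroup (Fin n) ℂ)) [IsProbabilityMeasure μ]

theorem integrable_tpow_mul (k i l j : ι → Fin n) :
    Integrable (fun U : Matrix.unitaryGroup (Fin n) ℂ =>
      tpow ι (U : Matrix (Fin n) (Fin n) ℂ) k i *
        star (tpow ι (U : Matrix (Fin n) (Fin n) ℂ) l j)) μ := by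
  refine Integrable.of_bound (C := 1)
    ((measurable_tpow k i).mul (Complex.continuous_conj.measurable.comp (measurable_tpow l j))).aestronglyMeasurable
    (Filter.Eventually.of_forall fun U => ?_)
  rw [norm_mul, norm_star]
  exact mul_le_one₀ (norm_tpow_le U k i) (norm_nonneg _) (norm_tpow_le U l j)

/-- The average `X ↦ ∫ U^{⊗ι} X (U^{⊗ι})ᴴ dμ(U)`. -/
noncomputable def avg (ι : Type) [Fintype ι] [DecidableEq ι] :
    Matrix (ι → Fin n) (ι → Fin n) ℂ →ₗ[ℂ] Matrix (ι → Fin n) (ι → Fin n) ℂ where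
  toFun X := Matrix.of fun k l => ∑ i, ∑ j, X i j *
    ∫ U : Matrix.unitaryGroup (Fin n) ℂ, tpow ι (U : Matrix (Fin n) (Fin n) ℂ) k i *
        star (tpow ι (U : Matrix (Fin n) (Fin n) ℂ) l j) ∂μ
  map_add' x y := by
    ext k l
    simp [add_mul, Finset.sum_add_distrib]
  map_smul' c x := by
    ext k l
    simp [Finset.mul_sum, mul_assoc]

theorem conj_apply (A X : Matrix (ι → Fin n) (ι → Fin n) ℂ) (k l : ι → Fin n) :
    (A * X * Aᴴ) k l = ∑ i, ∑ j, X i j * (A k i * star (A l j)) := by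
  simp only [Matrix.mul_apply, Finset.sum_mul, Matrix.conjTranspose_apply]
  rw [Finset.sum_comm]
  refine Finset.sum_congr rfl fun i _ => Finset.sum_congr rfl fun j _ => ?_
  ring

theorem integrable_conj (X : Matrix (ι → Fin n) (ι → Fin n) ℂ) (k l : ι → Fin n) :
    Integrable (fun U : Matrix.unitaryGroup (Fin n) ℂ =>
      (tpow ι (U : Matrix (Fin n) (Fin n) ℂ) * X *
        (tpow ι (U : Matrix (Fin n) (Fin n) ℂ))ᴴ) k l) μ := by
  simp only [conj_apply]
  exact integrable_finsetSum _ fun i _ => integrable_finsetSum _ fun j _ =>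
    (integrable_tpow_mul μ k i l j).const_mul _

theorem avg_apply (X : Matrix (ι → Fin n) (ι → Fin n) ℂ) (k l : ι → Fin n) :
    avg μ ι X k l = ∫ U : Matrix.unitaryGroup (Fin n) ℂ,
      (tpow ι (U : Matrix (Fin n) (Fin n) ℂ) * X *
        (tpow ι (U : Matrix (Fin n) (Fin n) ℂ))ᴴ) k l ∂μ := by
  simp only [conj_apply]
  refine Eq.symm ((integral_finsetSum _ fun i _ => integrable_finsetSum _ fun j _ =>
    (integrable_tpow_mul μ k i l j).const_mul _).trans ?_)
  refine Finset.sum_congr rfl fun i _ => ?_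
  rw [integral_finsetSum _ fun j _ => (integrable_tpow_mul μ k i l j).const_mul _]
  refine Finset.sum_congr rfl fun j _ => ?_
  exact integral_const_mul _ _

theorem mul_avg_mul_apply (A X : Matrix (ι → Fin n) (ι → Fin n) ℂ) (k l : ι → Fin n) :
    (A * avg μ ι X * Aᴴ) k l = ∫ U : Matrix.unitaryGroup (Fin n) ℂ,
      ((A * tpow ι (U : Matrix (Fin n) (Fin n) ℂ)) * X *
        (A * tpow ι (U : Matrix (Fin n) (Fin n) ℂ))ᴴ) k l ∂μ := by
  have h : ∀ U : Matrix.unitaryGroup (Fin n) ℂ,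
      (A * tpow ι (U : Matrix (Fin n) (Fin n) ℂ)) * X *
        (A * tpow ι (U : Matrix (Fin n) (Fin n) ℂ))ᴴ =
      A * (tpow ι (U : Matrix (Fin n) (Fin n) ℂ) * X *
        (tpow ι (U : Matrix (Fin n) (Fin n) ℂ))ᴴ) * Aᴴ := by
    intro U
    simp only [Matrix.conjTranspose_mul, Matrix.mul_assoc]
  simp only [h]
  simp only [conj_apply A]
  rw [integral_finsetSum _ fun i _ => integrable_finsetSum _ fun j _ =>
    (integrable_conj μ X i j).mul_const _]
  refine Finset.sum_congr rfl fun i _ => ?_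
  rw [integral_finsetSum _ fun j _ => (integrable_conj μ X i j).mul_const _]
  refine Finset.sum_congr rfl fun j _ => ?_
  rw [integral_mul_const, avg_apply]

theorem measurable_left_mul (g : Matrix.unitaryGroup (Fin n) ℂ) :
    Measurable fun U : Matrix.unitaryGroup (Fin n) ℂ => g * U := by
  refine Measurable.subtype_mk ?_
  refine measurable_pi_iff.mpr fun i => measurable_pi_iff.mpr fun j => ?_
  change Measurable fun U : Matrix.unitaryGroup (Fin n) ℂ =>
    ((g : Matrix (Fin n) (Fin n) ℂ) * (U : Matrix (Fin n) (Fin n) ℂ)) i j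
  simp only [Matrix.mul_apply]
  exact Finset.measurable_sum _ fun k _ => (measurable_entry k j).const_mul _

theorem avg_commute (hinv : ∀ g : Matrix.unitaryGroup (Fin n) ℂ,
      Measure.map (fun U : Matrix.unitaryGroup (Fin n) ℂ => g * U) μ = μ)
    (X : Matrix (ι → Fin n) (ι → Fin n) ℂ) (V : Matrix (Fin n) (Fin n) ℂ)
    (hV : V ∈ Matrix.unitaryGroup (Fin n) ℂ) : Commute (avg μ ι X) (tpow ι V) := by
  have h1 : tpow ι V * avg μ ι X * (tpow ι V)ᴴ = avg μ ι X := by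
    ext k l
    rw [mul_avg_mul_apply, avg_apply]
    nth_rw 2 [← hinv ⟨V, hV⟩]
    rw [integral_map (measurable_left_mul _).aemeasurable]
    · simp only [Submonoid.coe_mul, tpow_mul]
    · simp only [conj_apply]
      refine (Finset.measurable_sum _ fun i _ => Finset.measurable_sum _ fun j _ => ?_)
        |>.aestronglyMeasurable
      exact ((measurable_tpow k i).mul (Complex.continuous_conj.measurable.comp (measurable_tpow l j))).const_mul _
  have h2 : (tpow ι V)ᴴ * tpow ι V = 1 := by
    rw [← tpow_conjTranspose, ← tpow_mul, ← Matrix.star_eq_conjTranspose,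
      Matrix.mem_unitaryGroup_iff'.mp hV, tpow_one]
  calc avg μ ι X * tpow ι V = tpow ι V * avg μ ι X * (tpow ι V)ᴴ * tpow ι V := by rw [h1]
    _ = tpow ι V * avg μ ι X * ((tpow ι V)ᴴ * tpow ι V) := by simp only [Matrix.mul_assoc]
    _ = tpow ι V * avg μ ι X := by rw [h2, Matrix.mul_one]

/-- The average lies in the commutant of the `U^{⊗ι}`, hence in the span of permutations. -/
theorem avg_mem_range (hinv : ∀ g : Matrix.unitaryGroup (Fin n) ℂ,
      Measure.map (fun U : Matrix.unitaryGroup (Fin n) ℂ => g * U) μ = μ)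
    (X : Matrix (ι → Fin n) (ι → Fin n) ℂ) :
    avg μ ι X ∈ LinearMap.range (rep n ι) :=
  mem_range_rep fun V hV => avg_commute μ hinv X V hV

theorem avg_rep (x : Perm ι → ℂ) : avg μ ι (rep n ι x) = rep n ι x := by
  ext k l
  rw [avg_apply]
  have h : ∀ U : Matrix.unitaryGroup (Fin n) ℂ,
      tpow ι (U : Matrix (Fin n) (Fin n) ℂ) * rep n ι x *
        (tpow ι (U : Matrix (Fin n) (Fin n) ℂ))ᴴ = rep n ι x := by
    intro U
    rw [← (rep_commute_tpow x _).eq, Matrix.mul_assoc, ← tpow_conjTranspose, ← tpow_mul,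
      ← Matrix.star_eq_conjTranspose, Matrix.mem_unitaryGroup_iff.mp U.2, tpow_one, Matrix.mul_one]
  simp [h]

/-- Every subspace of `G → ℂ` is the kernel of an orthogonal projection matrix. -/
theorem exists_projection {G : Type} [Fintype G] [DecidableEq G] (K : Submodule ℂ (G → ℂ)) :
    ∃ Q : Matrix G G ℂ, Qᴴ = Q ∧ Q * Q = Q ∧ ∀ x, x ∈ K ↔ Q *ᵥ x = 0 := by
  set K' : Submodule ℂ (EuclideanSpace ℂ G) :=
    K.comap (WithLp.linearEquiv 2 ℂ (G → ℂ)).toLinearMap with hK'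
  set P : EuclideanSpace ℂ G →L[ℂ] EuclideanSpace ℂ G := K'ᗮ.starProjection with hP
  set e := Matrix.toEuclideanCLM (n := G) (𝕜 := ℂ) with he
  refine ⟨e.symm P, ?_, ?_, ?_⟩
  · have h : star P = P := isSelfAdjoint_starProjection K'ᗮ
    exact (e.symm.map_star' P).symm.trans (congrArg e.symm h)
  · rw [← map_mul]
    congr 1
    exact Submodule.isIdempotentElem_starProjection K'ᗮ
  · intro x
    have h1 : (P (WithLp.toLp 2 x)).ofLp = e.symm P *ᵥ x := by
      conv_lhs => rw [← e.apply_symm_apply P]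
      rfl
    rw [← h1]
    have h2 : x ∈ K ↔ WithLp.toLp 2 x ∈ K' := by
      rw [hK', Submodule.mem_comap]; rfl
    rw [h2, WithLp.ofLp_eq_zero, hP, Submodule.starProjection_apply_eq_zero_iff,
      Submodule.orthogonal_orthogonal]

theorem linearMap_trace_eq {κ : Type} [Fintype κ] [DecidableEq κ]
    (T : Matrix κ κ ℂ →ₗ[ℂ] Matrix κ κ ℂ) :
    LinearMap.trace ℂ _ T = ∑ k, ∑ l, T (Matrix.single k l (1 : ℂ)) k l := by
  rw [LinearMap.trace_eq_matrix_trace ℂ (Matrix.stdBasis ℂ κ κ), Matrix.trace,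
    Fintype.sum_prod_type]
  refine Finset.sum_congr rfl fun k _ => Finset.sum_congr rfl fun l _ => ?_
  rw [Matrix.diag_apply, LinearMap.toMatrix_apply, Matrix.stdBasis_eq_single]
  rfl

/-- The matrix of convolution by `φ` on the group algebra of `Perm ι`. -/
def convMat (φ : Perm ι → ℂ) : Matrix (Perm ι) (Perm ι) ℂ := Matrix.of fun σ τ => φ (σ * τ⁻¹)

theorem rep_convMat (φ x : Perm ι → ℂ) :
    rep n ι (convMat φ *ᵥ x) = rep n ι φ * rep n ι x := by
  simp only [rep_apply, Matrix.mulVec, dotProduct, convMat, Matrix.of_apply, Finset.sum_smul,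
    Finset.sum_mul, Finset.mul_sum]
  rw [Finset.sum_comm]
  refine Finset.sum_congr rfl fun τ _ => ?_
  refine Fintype.sum_equiv (Equiv.mulRight τ⁻¹) _ _ fun σ => ?_
  simp only [Equiv.coe_mulRight, Matrix.smul_mul, Matrix.mul_smul, smul_smul, ← permOp_mul,
    inv_mul_cancel_right, mul_comm (x τ)]

theorem rep_convMat_conjTranspose {φ : Perm ι → ℂ} (hφ : ∀ σ τ, φ (τ * σ * τ⁻¹) = φ σ)
    (x : Perm ι → ℂ) :
    rep n ι ((convMat φ)ᴴ *ᵥ x) = rep n ι x * (rep n ι φ)ᴴ := by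
  simp only [rep_apply, Matrix.mulVec, dotProduct, convMat, Matrix.of_apply, Finset.sum_smul,
    Finset.sum_mul, Finset.mul_sum, Matrix.conjTranspose_sum, Matrix.conjTranspose_apply,
    Matrix.conjTranspose_smul, permOp_conjTranspose]
  rw [Finset.sum_comm]
  conv_rhs => rw [Finset.sum_comm]
  refine Finset.sum_congr rfl fun τ _ => ?_
  refine Fintype.sum_equiv ((Equiv.inv _).trans (Equiv.mulRight τ)) _ _ fun σ => ?_
  have h : φ (τ * σ⁻¹) = φ (σ⁻¹ * τ) := by
    rw [← hφ (σ⁻¹ * τ) τ]; congr 1; group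
  simp only [Equiv.trans_apply, Equiv.inv_apply, Equiv.coe_mulRight, Matrix.smul_mul,
    Matrix.mul_smul, smul_smul, ← permOp_mul, h, _root_.mul_inv_rev, inv_inv, mul_inv_cancel_left]

/-- **Second moment bound.** For a class function `φ` on the symmetric group, the `L²(U(n))` norm
of `∑_σ φ(σ) tr(σ U^{⊗ι})` is at most `|ι|!` times the `ℓ²` norm of `φ`. Both sides are traces of
`X ↦ A X Aᴴ`, with `A` the operator of `φ`: on the left over the span of the permutation operators,
which is the commutant of the `U^{⊗ι}`, and on the right over the full group algebra. -/
theorem second_moment_le (hinv : ∀ g : Matrix.unitaryGroup (Fin n) ℂ,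
      Measure.map (fun U : Matrix.unitaryGroup (Fin n) ℂ => g * U) μ = μ)
    {φ : Perm ι → ℂ} (hφ : ∀ σ τ, φ (τ * σ * τ⁻¹) = φ σ) :
    ∫ U : Matrix.unitaryGroup (Fin n) ℂ,
      ‖(rep n ι φ * tpow ι (U : Matrix (Fin n) (Fin n) ℂ)).trace‖ ^ 2 ∂μ ≤
      (Fintype.card ι).factorial * ∑ σ, ‖φ σ‖ ^ 2 := by
  set A := rep n ι φ with hA
  obtain ⟨Q, hQ1, hQ2, hQ3⟩ := exists_projection (LinearMap.ker (rep n ι))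
  obtain ⟨t, ht⟩ := LinearMap.exists_rightInverse_of_surjective (rep n ι).rangeRestrict
    (LinearMap.range_rangeRestrict _)
  have ht' : ∀ y, rep n ι (t y) = y := fun y => congrArg Subtype.val (LinearMap.congr_fun ht y)
  set s : Matrix (ι → Fin n) (ι → Fin n) ℂ →ₗ[ℂ] (Perm ι → ℂ) :=
    Q.mulVecLin ∘ₗ t ∘ₗ (avg μ ι).codRestrict _ (avg_mem_range μ hinv) with hs
  have hRQ : ∀ x, rep n ι (Q *ᵥ x) = rep n ι x := by
    intro x
    have h1 : x - Q *ᵥ x ∈ LinearMap.ker (rep n ι) := by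
      rw [hQ3, Matrix.mulVec_sub, Matrix.mulVec_mulVec, hQ2, sub_self]
    rw [LinearMap.mem_ker, map_sub, sub_eq_zero] at h1
    exact h1.symm
  have hRs : ∀ X, rep n ι (s X) = avg μ ι X := by
    intro X
    simp only [hs, LinearMap.comp_apply, Matrix.mulVecLin_apply, hRQ, ht']
    rfl
  have hsR : s ∘ₗ rep n ι = Q.mulVecLin := by
    refine LinearMap.ext fun x => ?_
    simp only [hs, LinearMap.comp_apply, Matrix.mulVecLin_apply]
    have h1 : t ((avg μ ι).codRestrict _ (avg_mem_range μ hinv) (rep n ι x)) - x ∈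
        LinearMap.ker (rep n ι) := by
      rw [LinearMap.mem_ker, map_sub, ht', LinearMap.codRestrict_apply, avg_rep, sub_self]
    rw [hQ3, Matrix.mulVec_sub, sub_eq_zero] at h1
    exact h1
  set Λ : Matrix (Perm ι) (Perm ι) ℂ := convMat φ * (convMat φ)ᴴ with hΛ
  have hRΛ : ∀ x, rep n ι (Λ *ᵥ x) = A * rep n ι x * Aᴴ := by
    intro x
    rw [hΛ, ← Matrix.mulVec_mulVec, rep_convMat, rep_convMat_conjTranspose hφ, Matrix.mul_assoc]
  -- the second moment as a trace
  have h1 : ∫ U : Matrix.unitaryGroup (Fin n) ℂ,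
      ((‖(A * tpow ι (U : Matrix (Fin n) (Fin n) ℂ)).trace‖ ^ 2 : ℝ) : ℂ) ∂μ =
      LinearMap.trace ℂ _ (rep n ι ∘ₗ Λ.mulVecLin ∘ₗ s) := by
    rw [linearMap_trace_eq]
    have h2 : ∀ U : Matrix.unitaryGroup (Fin n) ℂ,
        ((‖(A * tpow ι (U : Matrix (Fin n) (Fin n) ℂ)).trace‖ ^ 2 : ℝ) : ℂ) =
        ∑ k : ι → Fin n, ∑ l : ι → Fin n, ((A * tpow ι (U : Matrix (Fin n) (Fin n) ℂ)) * Matrix.single k l (1 : ℂ) *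
        (A * tpow ι (U : Matrix (Fin n) (Fin n) ℂ))ᴴ) k l := by
      intro U
      rw [Complex.ofReal_pow, ← Complex.mul_conj', Matrix.trace, map_sum, Finset.sum_mul_sum]
      refine Finset.sum_congr rfl fun k _ => Finset.sum_congr rfl fun l _ => ?_
      rw [conj_apply]
      simp [Matrix.single_apply, ite_and]
    simp only [h2]
    have hint : ∀ k l : ι → Fin n, Integrable (fun U : Matrix.unitaryGroup (Fin n) ℂ =>
        ((A * tpow ι (U : Matrix (Fin n) (Fin n) ℂ)) * Matrix.single k l (1 : ℂ) *
        (A * tpow ι (U : Matrix (Fin n) (Fin n) ℂ))ᴴ) k l) μ := by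
      intro k l
      have h : ∀ U : Matrix.unitaryGroup (Fin n) ℂ,
          (A * tpow ι (U : Matrix (Fin n) (Fin n) ℂ)) * Matrix.single k l (1 : ℂ) *
            (A * tpow ι (U : Matrix (Fin n) (Fin n) ℂ))ᴴ =
          A * (tpow ι (U : Matrix (Fin n) (Fin n) ℂ) * Matrix.single k l (1 : ℂ) *
            (tpow ι (U : Matrix (Fin n) (Fin n) ℂ))ᴴ) * Aᴴ := by
        intro U
        simp only [Matrix.conjTranspose_mul, Matrix.mul_assoc]
      simp only [h]
      simp only [conj_apply A]
      exact integrable_finsetSum _ fun i _ => integrable_finsetSum _ fun j _ =>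
        (integrable_conj μ _ i j).mul_const _
    rw [integral_finsetSum _ fun k _ => integrable_finsetSum _ fun l _ => hint k l]
    refine Finset.sum_congr rfl fun k _ => ?_
    rw [integral_finsetSum _ fun l _ => hint k l]
    refine Finset.sum_congr rfl fun l _ => ?_
    rw [← mul_avg_mul_apply]
    simp only [LinearMap.comp_apply, Matrix.mulVecLin_apply, hRΛ, hRs]
  have h2 : LinearMap.trace ℂ _ (rep n ι ∘ₗ Λ.mulVecLin ∘ₗ s) = (Λ * Q).trace := by
    rw [LinearMap.trace_comp_comm', LinearMap.comp_assoc, hsR, ← Matrix.mulVecLin_mul,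
      ← Matrix.toLin'_apply', Matrix.trace_toLin'_eq]
  have h3 : 0 ≤ (Λ * (1 - Q)).trace := by
    have hq : (1 - Q) = (1 - Q) * (1 - Q)ᴴ := by
      rw [Matrix.conjTranspose_sub, Matrix.conjTranspose_one, hQ1, Matrix.mul_sub, Matrix.sub_mul,
        Matrix.sub_mul, hQ2]
      simp
    have hnn : 0 ≤ ((((1 - Q)ᴴ * convMat φ)) * ((1 - Q)ᴴ * convMat φ)ᴴ).trace :=
      (Matrix.posSemidef_self_mul_conjTranspose _).trace_nonneg
    rw [Matrix.conjTranspose_mul, Matrix.conjTranspose_conjTranspose, Matrix.mul_assoc,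
      Matrix.trace_mul_comm] at hnn
    rw [hq, hΛ]
    simpa only [Matrix.mul_assoc] using hnn
  have h4 : Λ.trace = (((Fintype.card ι).factorial * ∑ σ, ‖φ σ‖ ^ 2 : ℝ) : ℂ) := by
    rw [hΛ, Matrix.trace]
    have : ∀ σ : Perm ι, (convMat φ * (convMat φ)ᴴ).diag σ = ((∑ τ, ‖φ τ‖ ^ 2 : ℝ) : ℂ) := by
      intro σ
      rw [Matrix.diag_apply, Matrix.mul_apply]
      push_cast
      refine Fintype.sum_equiv ((Equiv.inv _).trans (Equiv.mulLeft σ)) _ _ fun τ => ?_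
      simp only [convMat, Matrix.conjTranspose_apply, Matrix.of_apply, Equiv.trans_apply,
        Equiv.inv_apply, Equiv.coe_mulLeft]
      exact Complex.mul_conj' _
    rw [Finset.sum_congr rfl fun σ _ => this σ]
    simp [Finset.card_univ, Fintype.card_perm]
  have h5 : (Λ * Q).trace ≤ Λ.trace := by
    rw [Matrix.mul_sub, Matrix.mul_one, Matrix.trace_sub, sub_nonneg] at h3
    exact h3
  rw [← h2, ← h1, h4, integral_complex_ofReal] at h5
  exact_mod_cast h5

end Haar

end HaarRatio

/-! ### Products of traces of powers and rotations of cycles -/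

namespace HaarRatio

set_option linter.unusedSectionVars false

open Matrix Equiv
open scoped Fin.NatCast Fin.CommRing

section PowerSums

variable {n : ℕ}

/-- The sum over paths of length `k` from `i 0` to `i k`, closed up by the matrix `B`. -/
theorem sum_path (A : Matrix (Fin n) (Fin n) ℂ) (k : ℕ) : ∀ B : Matrix (Fin n) (Fin n) ℂ,
    ∑ i : Fin (k + 1) → Fin n,
      (∏ a : Fin k, A (i a.succ) (i a.castSucc)) * B (i 0) (i (Fin.last k)) = (A ^ k * B).trace := by
  induction k with
  | zero =>
    intro B
    simp only [Finset.univ_eq_empty, Finset.prod_empty, one_mul, pow_zero, Matrix.trace,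
      Matrix.diag_apply]
    exact Fintype.sum_equiv (Equiv.funUnique (Fin 1) (Fin n)) _ _ fun i => rfl
  | succ k ih =>
    intro B
    rw [pow_succ, Matrix.mul_assoc, ← ih]
    rw [← (Fin.consEquiv fun _ : Fin (k + 2) => Fin n).sum_comp, Fintype.sum_prod_type_right]
    refine Finset.sum_congr rfl fun j _ => ?_
    rw [Matrix.mul_apply, Finset.mul_sum]
    refine Finset.sum_congr rfl fun x _ => ?_
    rw [Fin.prod_univ_succ]
    simp only [Fin.consEquiv_apply, Fin.cons_succ, Fin.castSucc_zero, Fin.cons_zero,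
      ← Fin.succ_castSucc, ← Fin.succ_last]
    ring

/-- The trace of a power as a sum over closed paths. -/
theorem trace_pow_eq_sum (A : Matrix (Fin n) (Fin n) ℂ) (k : ℕ) :
    (A ^ (k + 1)).trace = ∑ i : Fin (k + 1) → Fin n, ∏ a, A (i (a + 1)) (i a) := by
  rw [pow_succ, ← sum_path]
  refine Finset.sum_congr rfl fun i _ => ?_
  rw [Fin.prod_univ_castSucc]
  simp only [Fin.coeSucc_eq_succ, Fin.last_add_one]

variable {m D : ℕ}

/-- The disjoint union of `m` cycles, the `i`-th of length `κ i + 1`. -/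
abbrev Cyc (κ : Fin m → ℕ) : Type := Σ i : Fin m, Fin (κ i + 1)

/-- The permutation of `Cyc κ` rotating each cycle by one step. -/
def rot (κ : Fin m → ℕ) : Perm (Cyc κ) := Equiv.sigmaCongrRight fun _ => Equiv.addRight 1

theorem rot_apply (κ : Fin m → ℕ) (i : Fin m) (a : Fin (κ i + 1)) :
    rot κ ⟨i, a⟩ = ⟨i, a + 1⟩ := rfl

theorem rot_pow_apply (κ : Fin m → ℕ) (i : Fin m) (a : Fin (κ i + 1)) (s : ℕ) :
    (rot κ ^ s) ⟨i, a⟩ = ⟨i, a + (s : Fin (κ i + 1))⟩ := by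
  induction s with
  | zero => simp
  | succ s ih =>
    rw [pow_succ', Perm.mul_apply, ih, rot_apply]
    simp [add_assoc]

theorem prod_trace_pow (A : Matrix (Fin n) (Fin n) ℂ) (κ : Fin m → ℕ) :
    ∏ i, (A ^ (κ i + 1)).trace = ∑ f : Cyc κ → Fin n, ∏ a, A (f (rot κ a)) (f a) := by
  simp only [trace_pow_eq_sum]
  rw [Finset.prod_univ_sum, Fintype.piFinset_univ]
  refine (Fintype.sum_equiv (Equiv.piCurry fun _ _ => Fin n) _ _ fun f => ?_).symm
  rw [Fintype.prod_sigma]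
  rfl

/-- `∏ tr(A^{κ i + 1})` as the trace of a permutation operator on a standard tensor power. -/
theorem prod_trace_pow_eq_trace (A : Matrix (Fin n) (Fin n) ℂ) (κ : Fin m → ℕ) {ι : Type}
    [Fintype ι] [DecidableEq ι] (e : Cyc κ ≃ ι) :
    ∏ i, (A ^ (κ i + 1)).trace = (permOp n (e.permCongr (rot κ)) * tpow ι A).trace := by
  rw [prod_trace_pow, trace_permOp_tpow]
  refine Fintype.sum_equiv (e.arrowCongr (Equiv.refl _)) _ _ fun f => ?_
  refine Fintype.prod_equiv e _ _ fun a => ?_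
  simp [Equiv.permCongr_apply]

theorem card_cyc (κ : Fin m → ℕ) : Fintype.card (Cyc κ) = ∑ i, (κ i + 1) := by
  simp

theorem rot_pow_eq_iff (κ : Fin m → ℕ) (x : Cyc κ) (s : ℕ) :
    (rot κ ^ s) x = x ↔ κ x.1 + 1 ∣ s := by
  obtain ⟨i, a⟩ := x
  rw [rot_pow_apply]
  simp [Fin.natCast_eq_zero]

theorem exists_rot_pow {κ : Fin m → ℕ} {x y : Cyc κ} (h : x.1 = y.1) :
    ∃ s : ℕ, (rot κ ^ s) x = y := by
  obtain ⟨i, a⟩ := x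
  obtain ⟨j, b⟩ := y
  obtain rfl : i = j := h
  refine ⟨(b - a).val, ?_⟩
  rw [rot_pow_apply]
  simp

/-- Bijections intertwining two rotations: there are at most
`∑_π [κ = κ' ∘ π] ∏ (κ i + 1)`, since one is determined by the images of the base points of the
cycles, and it permutes cycles of equal lengths. -/
theorem card_intertwiner_le (κ κ' : Fin m → ℕ) (T : Finset (Cyc κ ≃ Cyc κ'))
    (hT : ∀ τ ∈ T, ∀ x, τ (rot κ x) = rot κ' (τ x)) :
    T.card ≤ ∑ π : Perm (Fin m), if κ = κ' ∘ π then ∏ i, (κ i + 1) else 0 := by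
  classical
  have hpow : ∀ τ ∈ T, ∀ s x, τ ((rot κ ^ s) x) = (rot κ' ^ s) (τ x) := by
    intro τ hτ s
    induction s with
    | zero => intro x; simp
    | succ s ih => intro x; rw [pow_succ', pow_succ', Perm.mul_apply, Perm.mul_apply, hT τ hτ, ih]
  have hlen : ∀ τ ∈ T, ∀ x, κ x.1 = κ' (τ x).1 := by
    intro τ hτ x
    have h : ∀ s, κ x.1 + 1 ∣ s ↔ κ' (τ x).1 + 1 ∣ s := by
      intro s
      rw [← rot_pow_eq_iff, ← rot_pow_eq_iff, ← hpow τ hτ, τ.injective.eq_iff]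
    have := Nat.dvd_antisymm ((h _).2 dvd_rfl) ((h _).1 dvd_rfl)
    omega
  have hinj : ∀ τ ∈ T, Function.Injective fun i : Fin m => (τ ⟨i, 0⟩).1 := by
    intro τ hτ i j hij
    obtain ⟨s, hs⟩ := exists_rot_pow hij
    rw [← hpow τ hτ, τ.injective.eq_iff, rot_pow_apply] at hs
    exact congrArg Sigma.fst hs
  set F : (Cyc κ ≃ Cyc κ') → (Fin m → Fin m) × (∀ i : Fin m, Fin (κ i + 1)) :=
    fun τ => (fun i => (τ ⟨i, 0⟩).1, fun i => Fin.ofNat (κ i + 1) (τ ⟨i, 0⟩).2.val) with hF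
  set S : Finset ((Fin m → Fin m) × (∀ i : Fin m, Fin (κ i + 1))) :=
    ((Finset.univ.filter fun π : Perm (Fin m) => κ = κ' ∘ π).image
      fun π : Perm (Fin m) => (⇑π : Fin m → Fin m))
      ×ˢ Finset.univ with hS
  have h1 : T.card ≤ S.card := by
    refine Finset.card_le_card_of_injOn F ?_ ?_
    · intro τ hτ
      simp only [hS, hF, Finset.coe_product, Finset.coe_univ, Set.mem_prod, Finset.mem_coe,
        Finset.mem_image, Finset.mem_filter, Finset.mem_univ, true_and, Set.mem_univ, and_true]
      refine ⟨Equiv.ofBijective _ (Finite.injective_iff_bijective.mp (hinj τ hτ)), ?_, rfl⟩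
      funext i
      exact hlen τ hτ ⟨i, 0⟩
    · intro τ hτ τ' hτ' hFF
      simp only [hF, Prod.mk.injEq] at hFF
      have h0 : ∀ i, τ ⟨i, 0⟩ = τ' ⟨i, 0⟩ := by
        intro i
        have e1 := congrFun hFF.1 i
        have e2 := congrArg Fin.val (congrFun hFF.2 i)
        have l1 := hlen τ hτ ⟨i, 0⟩
        have l2 := hlen τ' hτ' ⟨i, 0⟩
        simp only [Fin.val_ofNat] at e1 e2 l1 l2
        revert e1 e2 l1 l2
        obtain ⟨a, b⟩ := τ ⟨i, 0⟩
        obtain ⟨a', b'⟩ := τ' ⟨i, 0⟩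
        intro e1 e2 l1 l2
        dsimp only at e1 e2 l1 l2
        subst e1
        rw [Nat.mod_eq_of_lt (by omega), Nat.mod_eq_of_lt (by omega)] at e2
        rw [Fin.ext e2]
      ext1 ⟨i, a⟩
      obtain ⟨s, hs⟩ := exists_rot_pow (κ := κ) (x := ⟨i, 0⟩) (y := ⟨i, a⟩) rfl
      rw [← hs, hpow τ hτ, hpow τ' hτ', h0]
  refine h1.trans ?_
  rw [hS, Finset.card_product, Finset.card_univ, ← Finset.sum_filter, Finset.sum_const,
    smul_eq_mul]
  refine Nat.mul_le_mul Finset.card_image_le (le_of_eq ?_)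
  simp

end PowerSums

end HaarRatio

/-! ### Conjugation averages and orthogonality of degrees -/

namespace HaarRatio

set_option linter.unusedSectionVars false

open Matrix Equiv

section ClassAvg

variable {ι X R : Type} [Fintype ι] [DecidableEq ι] [Fintype X] [Field R] [CharZero R]

/-- The class function on `Perm ι` obtained from `∑ x, a x • δ_{σ x}` by averaging over
conjugation. -/
noncomputable def classAvg (σ : X → Perm ι) (a : X → R) (s : Perm ι) : R :=
  (Fintype.card (Perm ι) : R)⁻¹ * ∑ x, ∑ τ : Perm ι, if τ * σ x * τ⁻¹ = s then a x else 0

theorem classAvg_conj (σ : X → Perm ι) (a : X → R) (s ρ : Perm ι) :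
    classAvg σ a (ρ * s * ρ⁻¹) = classAvg σ a s := by
  unfold classAvg
  congr 1
  refine Finset.sum_congr rfl fun x _ => ?_
  refine Fintype.sum_equiv (Equiv.mulLeft ρ⁻¹) _ _ fun τ => ?_
  have : τ * σ x * τ⁻¹ = ρ * s * ρ⁻¹ ↔
      (ρ⁻¹ * τ) * σ x * (ρ⁻¹ * τ)⁻¹ = s := by
    rw [show (ρ⁻¹ * τ) * σ x * (ρ⁻¹ * τ)⁻¹ = ρ⁻¹ * (τ * σ x * τ⁻¹) * ρ by group]
    constructor
    · intro h; rw [h]; group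
    · intro h; rw [← h]; group
  simp [this]

theorem sum_classAvg_mul (σ : X → Perm ι) (a : X → R) {ψ : Perm ι → R}
    (hψ : ∀ s ρ, ψ (ρ * s * ρ⁻¹) = ψ s) :
    ∑ s, classAvg σ a s * ψ s = ∑ x, a x * ψ (σ x) := by
  have h0 : (Fintype.card (Perm ι) : R) ≠ 0 := Nat.cast_ne_zero.mpr Fintype.card_ne_zero
  have h1 : ∀ s, classAvg σ a s * ψ s = (Fintype.card (Perm ι) : R)⁻¹ *
      ∑ x, ∑ τ : Perm ι, if τ * σ x * τ⁻¹ = s then a x * ψ s else 0 := by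
    intro s
    rw [classAvg, mul_assoc, Finset.sum_mul]
    simp only [Finset.sum_mul, ite_mul, zero_mul]
  simp only [h1]
  rw [← Finset.mul_sum, Finset.sum_comm, Finset.mul_sum]
  refine Finset.sum_congr rfl fun x _ => ?_
  rw [Finset.sum_comm]
  simp only [Finset.sum_ite_eq, Finset.mem_univ, if_true, hψ, Finset.sum_const, Finset.card_univ,
    nsmul_eq_mul]
  rw [← mul_assoc, inv_mul_cancel₀ h0, one_mul]

theorem ofReal_classAvg (σ : X → Perm ι) (a : X → ℝ) (s : Perm ι) :
    ((classAvg σ a s : ℝ) : ℂ) = classAvg σ (fun x => (a x : ℂ)) s := by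
  simp only [classAvg]
  push_cast
  simp only [apply_ite ((↑) : ℝ → ℂ), Complex.ofReal_zero]

end ClassAvg

section Moments

variable {n : ℕ} (μ : Measure (Matrix.unitaryGroup (Fin n) ℂ)) [IsProbabilityMeasure μ]

theorem trace_permOp_conj {ι : Type} [Fintype ι] [DecidableEq ι] (A : Matrix (Fin n) (Fin n) ℂ)
    (s ρ : Perm ι) :
    (permOp n (ρ * s * ρ⁻¹) * tpow ι A).trace = (permOp n s * tpow ι A).trace := by
  rw [permOp_mul, permOp_mul, Matrix.mul_assoc, permOp_commute_tpow ρ⁻¹, ← Matrix.mul_assoc,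
    Matrix.trace_mul_comm, ← Matrix.mul_assoc, ← Matrix.mul_assoc, ← permOp_mul, inv_mul_cancel,
    permOp_one, Matrix.one_mul]

/-- The second moment bound for a linear combination of products of traces of equal degree. The
cardinalities on the right count the permutations conjugating `σ y` to `σ x`. -/
theorem second_moment_family {ι X : Type} [Fintype ι] [DecidableEq ι] [Fintype X]
    (hinv : ∀ g : Matrix.unitaryGroup (Fin n) ℂ,
      Measure.map (fun U : Matrix.unitaryGroup (Fin n) ℂ => g * U) μ = μ)
    (σ : X → Perm ι) (a : X → ℝ) :
    ∫ U : Matrix.unitaryGroup (Fin n) ℂ,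
      ‖∑ x, (a x : ℂ) * (permOp n (σ x) * tpow ι (U : Matrix (Fin n) (Fin n) ℂ)).trace‖ ^ 2 ∂μ ≤
      ∑ x, ∑ y, a x * a y *
        ((Finset.univ.filter fun τ : Perm ι => τ * σ y * τ⁻¹ = σ x).card : ℝ) := by
  have h := second_moment_le μ hinv (φ := classAvg σ fun x => (a x : ℂ))
    (fun s ρ => classAvg_conj σ _ s ρ)
  have h1 : ∀ U : Matrix.unitaryGroup (Fin n) ℂ,
      (rep n ι (classAvg σ fun x => (a x : ℂ)) * tpow ι (U : Matrix (Fin n) (Fin n) ℂ)).trace =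
      ∑ x, (a x : ℂ) * (permOp n (σ x) * tpow ι (U : Matrix (Fin n) (Fin n) ℂ)).trace := by
    intro U
    rw [rep_apply, Finset.sum_mul, Matrix.trace_sum]
    simp only [Matrix.smul_mul, Matrix.trace_smul, smul_eq_mul]
    exact sum_classAvg_mul σ (fun x => (a x : ℂ)) (fun s ρ => trace_permOp_conj _ s ρ)
  simp only [h1] at h
  refine h.trans (le_of_eq ?_)
  have h2 : ∀ s, ‖classAvg σ (fun x => (a x : ℂ)) s‖ ^ 2 = classAvg σ a s * classAvg σ a s := by
    intro s
    rw [← ofReal_classAvg, Complex.norm_real, Real.norm_eq_abs, sq_abs, sq]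
  have h0 : ((Fintype.card ι).factorial : ℝ) ≠ 0 := Nat.cast_ne_zero.mpr (Nat.factorial_ne_zero _)
  simp only [h2]
  rw [sum_classAvg_mul σ a (fun s ρ => classAvg_conj σ a s ρ), Finset.mul_sum]
  refine Finset.sum_congr rfl fun x _ => ?_
  rw [classAvg, Fintype.card_perm, mul_left_comm, mul_inv_cancel_left₀ h0, Finset.mul_sum]
  refine Finset.sum_congr rfl fun y _ => ?_
  rw [← Finset.sum_filter, Finset.sum_const, nsmul_eq_mul]
  ring

/-- Bounded measurable complex functions on the unitary group. -/
def BddMeas (f : Matrix.unitaryGroup (Fin n) ℂ → ℂ) : Prop :=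
  Measurable f ∧ ∃ C, ∀ U, ‖f U‖ ≤ C

theorem BddMeas.const (c : ℂ) : BddMeas fun _ : Matrix.unitaryGroup (Fin n) ℂ => c :=
  ⟨measurable_const, ‖c‖, fun _ => le_rfl⟩

theorem BddMeas.mul {f g : Matrix.unitaryGroup (Fin n) ℂ → ℂ} (hf : BddMeas f) (hg : BddMeas g) :
    BddMeas fun U => f U * g U := by
  obtain ⟨hf, C, hC⟩ := hf
  obtain ⟨hg, C', hC'⟩ := hg
  refine ⟨hf.mul hg, C * C', fun U => ?_⟩
  rw [norm_mul]
  exact mul_le_mul (hC U) (hC' U) (norm_nonneg _) ((norm_nonneg _).trans (hC U))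

theorem BddMeas.sum {Y : Type} {s : Finset Y} {f : Y → Matrix.unitaryGroup (Fin n) ℂ → ℂ}
    (hf : ∀ y ∈ s, BddMeas (f y)) : BddMeas fun U => ∑ y ∈ s, f y U := by
  classical
  induction s using Finset.induction_on with
  | empty => simpa using BddMeas.const 0
  | insert y s hy ih =>
    simp only [Finset.sum_insert hy]
    obtain ⟨h1, C, hC⟩ := hf y (Finset.mem_insert_self _ _)
    obtain ⟨h2, C', hC'⟩ := ih fun z hz => hf z (Finset.mem_insert_of_mem hz)
    exact ⟨h1.add h2, C + C', fun U => (norm_add_le _ _).trans (add_le_add (hC U) (hC' U))⟩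

theorem BddMeas.prod {Y : Type} {s : Finset Y} {f : Y → Matrix.unitaryGroup (Fin n) ℂ → ℂ}
    (hf : ∀ y ∈ s, BddMeas (f y)) : BddMeas fun U => ∏ y ∈ s, f y U := by
  classical
  induction s using Finset.induction_on with
  | empty => simpa using BddMeas.const 1
  | insert y s hy ih =>
    simp only [Finset.prod_insert hy]
    exact (hf y (Finset.mem_insert_self _ _)).mul (ih fun z hz => hf z (Finset.mem_insert_of_mem hz))

theorem BddMeas.star {f : Matrix.unitaryGroup (Fin n) ℂ → ℂ} (hf : BddMeas f) :
    BddMeas fun U => (starRingEnd ℂ) (f U) := by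
  obtain ⟨hf, C, hC⟩ := hf
  exact ⟨Complex.continuous_conj.measurable.comp hf, C, fun U => by rw [Complex.norm_conj]; exact hC U⟩

theorem BddMeas.integrable {f : Matrix.unitaryGroup (Fin n) ℂ → ℂ} (hf : BddMeas f) :
    Integrable f μ := by
  obtain ⟨hf, C, hC⟩ := hf
  exact Integrable.of_bound hf.aestronglyMeasurable C (Filter.Eventually.of_forall hC)

theorem bddMeas_pow_entry (k : ℕ) : ∀ i j, BddMeas fun U : Matrix.unitaryGroup (Fin n) ℂ =>
    ((U : Matrix (Fin n) (Fin n) ℂ) ^ k) i j := by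
  induction k with
  | zero => intro i j; simpa using BddMeas.const _
  | succ k ih =>
    intro i j
    simp only [pow_succ, Matrix.mul_apply]
    exact BddMeas.sum fun l _ => (ih i l).mul
      ⟨measurable_entry l j, 1, fun U => entry_norm_bound_of_unitary U.2 _ _⟩

theorem bddMeas_trace_pow (k : ℕ) : BddMeas fun U : Matrix.unitaryGroup (Fin n) ℂ =>
    ((U : Matrix (Fin n) (Fin n) ℂ) ^ k).trace :=
  BddMeas.sum fun i _ => bddMeas_pow_entry k i i

/-- Functions homogeneous of different degrees under scalar unitaries are orthogonal. -/
theorem integral_mul_conj_eq_zero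
    (hinv : ∀ g : Matrix.unitaryGroup (Fin n) ℂ,
      Measure.map (fun U : Matrix.unitaryGroup (Fin n) ℂ => g * U) μ = μ)
    {f f' : Matrix.unitaryGroup (Fin n) ℂ → ℂ} {d d' : ℕ} (hd : d ≠ d')
    (hf : BddMeas f) (hf' : BddMeas f')
    (h : ∀ (g U : Matrix.unitaryGroup (Fin n) ℂ) (c : ℂ),
      (g : Matrix (Fin n) (Fin n) ℂ) = c • 1 → f (g * U) = c ^ d * f U)
    (h' : ∀ (g U : Matrix.unitaryGroup (Fin n) ℂ) (c : ℂ),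
      (g : Matrix (Fin n) (Fin n) ℂ) = c • 1 → f' (g * U) = c ^ d' * f' U) :
    ∫ U, f U * (starRingEnd ℂ) (f' U) ∂μ = 0 := by
  -- the scalar `c = e^{iπ/(d - d')}` satisfies `c ^ d * conj c ^ d' = -1`
  set t : ℝ := Real.pi / ((d : ℝ) - d') with ht
  set c : ℂ := Complex.exp (t * Complex.I) with hc
  have hdd : (d : ℝ) - d' ≠ 0 := sub_ne_zero.mpr (by exact_mod_cast hd)
  have hcc : (starRingEnd ℂ) c = Complex.exp (-(t * Complex.I)) := by
    rw [hc, ← Complex.exp_conj]; simp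
  have hc1 : (starRingEnd ℂ) c * c = 1 := by
    rw [hcc, hc, ← Complex.exp_add]; simp
  have hcd : c ^ d * (starRingEnd ℂ) c ^ d' = -1 := by
    rw [hcc, hc, ← Complex.exp_nat_mul, ← Complex.exp_nat_mul, ← Complex.exp_add,
      ← Complex.exp_pi_mul_I]
    congr 1
    have : (Real.pi : ℂ) = ((d : ℂ) - d') * t := by
      rw [ht]; push_cast
      have : ((d : ℂ) - d') ≠ 0 := by exact_mod_cast hdd
      field_simp
    rw [this]; ring
  have hg : c • (1 : Matrix (Fin n) (Fin n) ℂ) ∈ Matrix.unitaryGroup (Fin n) ℂ := by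
    rw [Matrix.mem_unitaryGroup_iff']
    simp only [star_smul, star_one, smul_mul_smul_comm, mul_one]
    rw [show Star.star c * c = 1 from hc1, one_smul]
  set G : Matrix.unitaryGroup (Fin n) ℂ := ⟨_, hg⟩
  have key : ∫ U, f U * (starRingEnd ℂ) (f' U) ∂μ = -∫ U, f U * (starRingEnd ℂ) (f' U) ∂μ := by
    conv_lhs => rw [← hinv G]
    rw [integral_map (measurable_left_mul _).aemeasurable
      (hf.mul hf'.star).1.aestronglyMeasurable, ← integral_neg]
    refine integral_congr_ae (Filter.Eventually.of_forall fun U => ?_)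
    dsimp only
    rw [h G U c rfl, h' G U c rfl, map_mul, map_pow, mul_mul_mul_comm, hcd]
    ring
  linear_combination (1 / 2 : ℂ) * key

/-- Pythagoras for functions homogeneous of distinct degrees under scalar unitaries. -/
theorem integral_norm_sum_sq
    (hinv : ∀ g : Matrix.unitaryGroup (Fin n) ℂ,
      Measure.map (fun U : Matrix.unitaryGroup (Fin n) ℂ => g * U) μ = μ)
    {F : ℕ → Matrix.unitaryGroup (Fin n) ℂ → ℂ} (hF : ∀ d, BddMeas (F d))
    (h : ∀ (d : ℕ) (g U : Matrix.unitaryGroup (Fin n) ℂ) (c : ℂ),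
      (g : Matrix (Fin n) (Fin n) ℂ) = c • 1 → F d (g * U) = c ^ d * F d U) (s : Finset ℕ) :
    ∫ U, ‖∑ d ∈ s, F d U‖ ^ 2 ∂μ = ∑ d ∈ s, ∫ U, ‖F d U‖ ^ 2 ∂μ := by
  have key : ((∫ U, ‖∑ d ∈ s, F d U‖ ^ 2 ∂μ : ℝ) : ℂ) =
      ((∑ d ∈ s, ∫ U, ‖F d U‖ ^ 2 ∂μ : ℝ) : ℂ) := by
    rw [Complex.ofReal_sum, ← integral_complex_ofReal]
    have h1 : ∀ U, ((‖∑ d ∈ s, F d U‖ ^ 2 : ℝ) : ℂ) =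
        ∑ d ∈ s, ∑ d' ∈ s, F d U * (starRingEnd ℂ) (F d' U) := by
      intro U
      rw [Complex.ofReal_pow, ← Complex.mul_conj', map_sum, Finset.sum_mul_sum]
    simp only [h1]
    have hi : ∀ d d', Integrable (fun U => F d U * (starRingEnd ℂ) (F d' U)) μ :=
      fun d d' => ((hF d).mul (hF d').star).integrable μ
    rw [integral_finsetSum _ fun d _ => integrable_finsetSum _ fun d' _ => hi d d']
    refine Finset.sum_congr rfl fun d hd => ?_
    rw [integral_finsetSum _ fun d' _ => hi d d', Finset.sum_eq_single d, ← integral_complex_ofReal]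
    · refine integral_congr_ae (Filter.Eventually.of_forall fun U => ?_)
      dsimp only
      rw [Complex.ofReal_pow, ← Complex.mul_conj']
    · intro d' _ hne
      exact integral_mul_conj_eq_zero μ hinv hne.symm (hF d) (hF d') (h d) (h d')
    · intro hn; exact absurd hd hn
  exact_mod_cast key

end Moments

end HaarRatio

/-! ### Moments of linear combinations of traces of powers -/

namespace HaarRatio

open Matrix Equiv

section TraceMoments

variable {n m D : ℕ} (μ : Measure (Matrix.unitaryGroup (Fin n) ℂ)) [IsProbabilityMeasure μ]

/-- The total degree of `∏ tr(U^{κ i + 1})`. -/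
def deg (κ : Fin m → Fin D) : ℕ := ∑ i, ((κ i : ℕ) + 1)

/-- The map `κ` with natural numbers as values; the attached cycles have length `nat κ i + 1`. -/
def nat (κ : Fin m → Fin D) : Fin m → ℕ := fun i => (κ i : ℕ)

theorem card_cyc_nat {d : ℕ} (x : {κ : Fin m → Fin D // deg κ = d}) :
    Fintype.card (Cyc (nat x.1)) = d :=
  (card_cyc _).trans x.2

/-- A numbering of the union of cycles attached to `x`. -/
noncomputable def numbering {d : ℕ} (x : {κ : Fin m → Fin D // deg κ = d}) :
    Cyc (nat x.1) ≃ Fin d :=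
  Fintype.equivFinOfCardEq (card_cyc_nat x)

/-- `card_intertwiner_le` transported along the numberings to permutations of `Fin d`. -/
theorem card_conj_le {d : ℕ} (x y : {κ : Fin m → Fin D // deg κ = d}) :
    (Finset.univ.filter fun τ : Perm (Fin d) =>
      τ * (numbering y).permCongr (rot (nat y.1)) * τ⁻¹ =
        (numbering x).permCongr (rot (nat x.1))).card ≤
      ∑ π : Perm (Fin m), if nat y.1 = nat x.1 ∘ π then ∏ i, (nat y.1 i + 1) else 0 := by
  classical
  set S := Finset.univ.filter fun τ : Perm (Fin d) =>
      τ * (numbering y).permCongr (rot (nat y.1)) * τ⁻¹ =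
        (numbering x).permCongr (rot (nat x.1)) with hS
  set F : Perm (Fin d) → (Cyc (nat y.1) ≃ Cyc (nat x.1)) :=
    fun τ => ((numbering y).trans τ).trans (numbering x).symm with hF
  have hinj : Function.Injective F := by
    intro τ τ' h
    ext1 z
    have := DFunLike.congr_fun h ((numbering y).symm z)
    simpa [hF] using this
  rw [← Finset.card_image_of_injective S hinj]
  refine card_intertwiner_le _ _ _ ?_
  intro ρ hρ z
  obtain ⟨τ, hτ, rfl⟩ := Finset.mem_image.mp hρ
  rw [hS, Finset.mem_filter] at hτ
  have h1 := DFunLike.congr_fun (mul_inv_eq_iff_eq_mul.mp hτ.2) (numbering y z)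
  simp only [Perm.mul_apply, Equiv.permCongr_apply, Equiv.symm_apply_apply] at h1
  simp only [hF, Equiv.trans_apply]
  rw [h1, Equiv.symm_apply_apply]

variable (g : Fin D → ℝ)

/-- The component of degree `d` of `(∑ k, g k tr(U^{k+1}))^m`. -/
noncomputable def comp (m : ℕ) (d : ℕ) (U : Matrix.unitaryGroup (Fin n) ℂ) : ℂ :=
  ∑ x : {κ : Fin m → Fin D // deg κ = d}, ((∏ i, g (x.1 i) : ℝ) : ℂ) *
    ∏ i, ((U : Matrix (Fin n) (Fin n) ℂ) ^ ((x.1 i : ℕ) + 1)).trace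

theorem bddMeas_comp (d : ℕ) : BddMeas (comp (n := n) g m d) :=
  BddMeas.sum fun _ _ => (BddMeas.const _).mul (BddMeas.prod fun _ _ => bddMeas_trace_pow _)

theorem comp_smul (d : ℕ) (V U : Matrix.unitaryGroup (Fin n) ℂ) (c : ℂ)
    (hV : (V : Matrix (Fin n) (Fin n) ℂ) = c • 1) :
    comp g m d (V * U) = c ^ d * comp g m d U := by
  simp only [comp, Finset.mul_sum]
  refine Finset.sum_congr rfl fun x _ => ?_
  have h : ∀ k : ℕ, (((V * U : Matrix.unitaryGroup (Fin n) ℂ) : Matrix (Fin n) (Fin n) ℂ) ^ k).trace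
      = c ^ k * ((U : Matrix (Fin n) (Fin n) ℂ) ^ k).trace := by
    intro k
    rw [Submonoid.coe_mul, hV, Matrix.smul_mul, Matrix.one_mul, smul_pow, Matrix.trace_smul,
      smul_eq_mul]
  simp only [h, Finset.prod_mul_distrib, Finset.prod_pow_eq_pow_sum]
  rw [show ∑ i, ((x.1 i : ℕ) + 1) = d from x.2]
  ring

theorem sum_comp (U : Matrix.unitaryGroup (Fin n) ℂ) :
    ∑ d ∈ Finset.univ.image (deg : (Fin m → Fin D) → ℕ), comp g m d U =
      (∑ k : Fin D, (g k : ℂ) * ((U : Matrix (Fin n) (Fin n) ℂ) ^ ((k : ℕ) + 1)).trace) ^ m := by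
  have h1 : (∑ k : Fin D, (g k : ℂ) * ((U : Matrix (Fin n) (Fin n) ℂ) ^ ((k : ℕ) + 1)).trace) ^ m =
      ∑ κ : Fin m → Fin D, ((∏ i, g (κ i) : ℝ) : ℂ) *
        ∏ i, ((U : Matrix (Fin n) (Fin n) ℂ) ^ ((κ i : ℕ) + 1)).trace := by
    rw [← Fin.prod_const, Finset.prod_univ_sum, Fintype.piFinset_univ]
    refine Finset.sum_congr rfl fun κ _ => ?_
    rw [Finset.prod_mul_distrib, Complex.ofReal_prod]
  rw [h1, ← Finset.sum_fiberwise_of_maps_to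
    (g := (deg : (Fin m → Fin D) → ℕ)) (fun κ _ => Finset.mem_image_of_mem _ (Finset.mem_univ κ))]
  refine Finset.sum_congr rfl fun d _ => ?_
  rw [comp, Finset.sum_subtype (Finset.univ.filter fun κ : Fin m → Fin D => deg κ = d)
    (p := fun κ => deg κ = d) (by simp)]

/-- The contribution of degree `d` to the moment bound. The nonnegativity of `g` allows the
conjugacy count to be replaced by its upper bound. -/
theorem integral_comp_le (hg : ∀ k, 0 ≤ g k)
    (hinv : ∀ g : Matrix.unitaryGroup (Fin n) ℂ,
      Measure.map (fun U : Matrix.unitaryGroup (Fin n) ℂ => g * U) μ = μ) (d : ℕ) :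
    ∫ U, ‖comp g m d U‖ ^ 2 ∂μ ≤ ∑ x : {κ : Fin m → Fin D // deg κ = d},
      (m.factorial : ℝ) * ∏ i, (((x.1 i : ℕ) + 1 : ℝ) * g (x.1 i) ^ 2) := by
  have h := second_moment_family μ hinv
    (fun x : {κ : Fin m → Fin D // deg κ = d} => (numbering x).permCongr (rot (nat x.1)))
    (fun x => ∏ i, g (x.1 i))
  have h1 : ∀ U : Matrix.unitaryGroup (Fin n) ℂ, comp g m d U =
      ∑ x : {κ : Fin m → Fin D // deg κ = d}, ((∏ i, g (x.1 i) : ℝ) : ℂ) *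
        (permOp n ((numbering x).permCongr (rot (nat x.1))) *
          tpow (Fin d) (U : Matrix (Fin n) (Fin n) ℂ)).trace := by
    intro U
    refine Finset.sum_congr rfl fun x _ => ?_
    rw [← prod_trace_pow_eq_trace]
    rfl
  simp only [h1]
  refine h.trans (Finset.sum_le_sum fun x _ => ?_)
  set f : (Fin m → Fin D) → ℝ := fun κ => (∏ i, g (κ i)) * ∏ i, ((κ i : ℕ) + 1 : ℝ) with hf
  have hf0 : ∀ κ, 0 ≤ f κ := fun κ =>
    mul_nonneg (Finset.prod_nonneg fun i _ => hg _) (Finset.prod_nonneg fun i _ => by positivity)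
  have hx0 : 0 ≤ ∏ i, g (x.1 i) := Finset.prod_nonneg fun i _ => hg _
  calc _ ≤ ∑ y : {κ : Fin m → Fin D // deg κ = d}, (∏ i, g (x.1 i)) *
        ∑ π : Perm (Fin m), (if y.1 = x.1 ∘ π then f y.1 else 0) := by
        refine Finset.sum_le_sum fun y _ => ?_
        rw [mul_assoc]
        refine mul_le_mul_of_nonneg_left ?_ hx0
        have hc : ((Finset.univ.filter fun τ : Perm (Fin d) =>
            τ * (numbering y).permCongr (rot (nat y.1)) * τ⁻¹ =
            (numbering x).permCongr (rot (nat x.1))).card : ℝ) ≤ _ :=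
          Nat.cast_le.mpr (card_conj_le x y)
        refine (mul_le_mul_of_nonneg_left hc (Finset.prod_nonneg fun i _ => hg _)).trans
          (le_of_eq ?_)
        rw [Nat.cast_sum, Finset.mul_sum]
        refine Finset.sum_congr rfl fun π _ => ?_
        have he : nat y.1 = nat x.1 ∘ π ↔ y.1 = x.1 ∘ π := by
          simp only [funext_iff, nat, Function.comp, Fin.ext_iff]
        by_cases hy : y.1 = x.1 ∘ π
        · rw [if_pos (he.2 hy), if_pos hy, hf]
          simp [nat]
        · rw [if_neg (mt he.1 hy), if_neg hy]
          simp
    _ = (∏ i, g (x.1 i)) * ∑ π : Perm (Fin m), ∑ y : {κ : Fin m → Fin D // deg κ = d},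
        (if y.1 = x.1 ∘ π then f y.1 else 0) := by
        rw [← Finset.mul_sum, Finset.sum_comm]
    _ ≤ (∏ i, g (x.1 i)) * ∑ π : Perm (Fin m), f x.1 := by
        refine mul_le_mul_of_nonneg_left (Finset.sum_le_sum fun π _ => ?_) hx0
        rw [← Finset.sum_subtype (Finset.univ.filter fun κ : Fin m → Fin D => deg κ = d)
          (p := fun κ => deg κ = d) (by simp) fun κ => if κ = x.1 ∘ π then f κ else 0]
        refine (Finset.sum_le_sum_of_subset_of_nonneg (Finset.subset_univ _) fun κ _ _ => ?_).trans
          (le_of_eq ?_)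
        · split_ifs
          exacts [hf0 κ, le_rfl]
        · rw [Finset.sum_ite_eq' Finset.univ (x.1 ∘ π) f, if_pos (Finset.mem_univ _), hf]
          dsimp only [Function.comp]
          rw [Equiv.prod_comp π (fun i => g (x.1 i)), Equiv.prod_comp π (fun i => ((x.1 i : ℕ) + 1 : ℝ))]
    _ = _ := by
        rw [Finset.sum_const, Finset.card_univ, Fintype.card_perm, Fintype.card_fin, nsmul_eq_mul,
          hf, Finset.prod_mul_distrib, Finset.prod_pow]
        ring

/-- **Moment bound** for linear combinations of traces of powers: the right-hand side is the moment
of the corresponding combination of independent complex Gaussians of variances `k + 1`. -/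
theorem moment_le (hg : ∀ k, 0 ≤ g k)
    (hinv : ∀ g : Matrix.unitaryGroup (Fin n) ℂ,
      Measure.map (fun U : Matrix.unitaryGroup (Fin n) ℂ => g * U) μ = μ) (m : ℕ) :
    ∫ U : Matrix.unitaryGroup (Fin n) ℂ, ‖∑ k : Fin D, (g k : ℂ) *
      ((U : Matrix (Fin n) (Fin n) ℂ) ^ ((k : ℕ) + 1)).trace‖ ^ (2 * m) ∂μ ≤
      m.factorial * (∑ k : Fin D, ((k : ℕ) + 1 : ℝ) * g k ^ 2) ^ m := by
  have h1 : ∀ U : Matrix.unitaryGroup (Fin n) ℂ, ‖∑ k : Fin D, (g k : ℂ) *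
      ((U : Matrix (Fin n) (Fin n) ℂ) ^ ((k : ℕ) + 1)).trace‖ ^ (2 * m) =
      ‖∑ d ∈ Finset.univ.image (deg : (Fin m → Fin D) → ℕ), comp g m d U‖ ^ 2 := by
    intro U
    rw [sum_comp, norm_pow, ← pow_mul, mul_comm]
  simp only [h1]
  rw [integral_norm_sum_sq μ hinv (fun d => bddMeas_comp g d)
    (fun d V U c hV => comp_smul g d V U c hV)]
  refine (Finset.sum_le_sum fun d _ => integral_comp_le μ g hg hinv d).trans (le_of_eq ?_)
  set w : (Fin m → Fin D) → ℝ := fun κ =>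
    (m.factorial : ℝ) * ∏ i, (((κ i : ℕ) + 1 : ℝ) * g (κ i) ^ 2) with hw
  have h2 : ∀ d, ∑ x : {κ : Fin m → Fin D // deg κ = d}, w x.1 =
      ∑ κ ∈ Finset.univ.filter fun κ : Fin m → Fin D => deg κ = d, w κ := fun d =>
    (Finset.sum_subtype _ (by simp) _).symm
  rw [Finset.sum_congr rfl fun d _ => h2 d, Finset.sum_fiberwise_of_maps_to
    (fun κ _ => Finset.mem_image_of_mem _ (Finset.mem_univ κ)), hw, ← Finset.mul_sum,
    ← Fin.prod_const, Finset.prod_univ_sum, Fintype.piFinset_univ]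

end TraceMoments

end HaarRatio

/-! ### Eigenvalues -/

namespace HaarRatio

section Eigenvalues

open Polynomial

variable {n : ℕ} (A : Matrix (Fin n) (Fin n) ℂ)

theorem charpoly_eq_prod_roots : A.charpoly = (A.charpoly.roots.map fun a => X - C a).prod :=
  (IsAlgClosed.splits A.charpoly).eq_prod_roots_of_monic A.charpoly_monic

theorem card_roots_charpoly : A.charpoly.roots.card = n := by
  rw [← (IsAlgClosed.splits A.charpoly).natDegree_eq_card_roots, Matrix.charpoly_natDegree_eq_dim,
    Fintype.card_fin]

theorem det_smul_one_sub (x : ℂ) :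
    (x • (1 : Matrix (Fin n) (Fin n) ℂ) - A).det = (A.charpoly.roots.map fun a => x - a).prod := by
  rw [Matrix.smul_one_eq_diagonal, ← Matrix.scalar_apply, ← Matrix.eval_charpoly]
  conv_lhs => rw [charpoly_eq_prod_roots A]
  rw [eval_multiset_prod, Multiset.map_map]
  simp

/-- The determinant of a polynomial in `A` is the product of its values at the eigenvalues. -/
theorem det_aeval (p : ℂ[X]) :
    (aeval A p).det = (A.charpoly.roots.map fun a => p.eval a).prod := by
  have hC : ∀ c : ℂ, (aeval A (C c)).det = (A.charpoly.roots.map fun a => (C c).eval a).prod := by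
    intro c
    rw [aeval_C, Algebra.algebraMap_eq_smul_one, Matrix.det_smul, Matrix.det_one]
    simp [card_roots_charpoly]
  have hX : ∀ b : ℂ, (aeval A (X - C b)).det =
      (A.charpoly.roots.map fun a => (X - C b).eval a).prod := by
    intro b
    rw [map_sub, aeval_X, aeval_C, Algebra.algebraMap_eq_smul_one, ← neg_sub, Matrix.det_neg,
      det_smul_one_sub]
    have : ((-1 : ℂ)) ^ Fintype.card (Fin n) = (A.charpoly.roots.map fun _ => (-1 : ℂ)).prod := by
      simp [card_roots_charpoly]
    rw [this, ← Multiset.prod_map_mul]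
    simp
  have hmul : ∀ p q : ℂ[X], (aeval A p).det = (A.charpoly.roots.map fun a => p.eval a).prod →
      (aeval A q).det = (A.charpoly.roots.map fun a => q.eval a).prod →
      (aeval A (p * q)).det = (A.charpoly.roots.map fun a => (p * q).eval a).prod := by
    intro p q hp hq
    rw [map_mul, Matrix.det_mul, hp, hq, ← Multiset.prod_map_mul]
    simp
  rw [(IsAlgClosed.splits p).eq_prod_roots]
  refine hmul _ _ (hC _) ?_
  induction p.roots using Multiset.induction_on with
  | empty => simp
  | cons b s ih =>
    rw [Multiset.map_cons, Multiset.prod_cons]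
    exact hmul _ _ (hX b) ih

theorem det_one_sub_smul (x : ℂ) :
    ((1 : Matrix (Fin n) (Fin n) ℂ) - x • A).det = (A.charpoly.roots.map fun a => 1 - x * a).prod := by
  have h := det_aeval A (1 - C x * X)
  simpa [Algebra.smul_def] using h

theorem trace_pow_eq_sum_roots (k : ℕ) :
    (A ^ k).trace = (A.charpoly.roots.map fun a => a ^ k).sum := by
  have h : (A ^ k).charpoly = ((A.charpoly.roots.map fun a => a ^ k).map fun a => X - C a).prod := by
    refine Polynomial.funext fun x => ?_
    have h1 := det_aeval A (C x - X ^ k)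
    rw [Matrix.eval_charpoly, eval_multiset_prod, Multiset.map_map, Multiset.map_map]
    simpa [Algebra.algebraMap_eq_smul_one, ← Matrix.smul_one_eq_diagonal] using h1
  rw [Matrix.trace_eq_sum_roots_charpoly, h, Polynomial.roots_multiset_prod_X_sub_C]

open scoped Matrix.Norms.L2Operator in
theorem norm_of_mem_roots {A : Matrix (Fin n) (Fin n) ℂ} (hA : A ∈ Matrix.unitaryGroup (Fin n) ℂ)
    {a : ℂ} (ha : a ∈ A.charpoly.roots) : ‖a‖ = 1 := by
  have h1 : a ∈ spectrum ℂ A := Matrix.mem_spectrum_iff_isRoot_charpoly.mpr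
    (Polynomial.isRoot_of_mem_roots ha)
  simpa using spectrum.subset_circle_of_unitary (𝕜 := ℂ) hA h1

end Eigenvalues

end HaarRatio

/-! ### Exponential moments -/

namespace HaarRatio

section ExpMoments

variable {n D : ℕ} (μ : Measure (Matrix.unitaryGroup (Fin n) ℂ)) [IsProbabilityMeasure μ]

theorem bddMeas_sum_trace (g : Fin D → ℝ) :
    BddMeas fun U : Matrix.unitaryGroup (Fin n) ℂ => ∑ k : Fin D, (g k : ℂ) *
      ((U : Matrix (Fin n) (Fin n) ℂ) ^ ((k : ℕ) + 1)).trace :=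
  BddMeas.sum fun _ _ => (BddMeas.const _).mul (bddMeas_trace_pow _)

theorem exp_le_tsum (x : ℝ) : Real.exp x ≤ ∑' m : ℕ, 2 * (x ^ (2 * m) / (2 * m).factorial) := by
  rw [tsum_mul_left, (Real.hasSum_cosh x).tsum_eq, Real.cosh_eq]
  have := Real.exp_pos (-x)
  linarith

/-- **Gaussian exponential moments** of linear combinations of traces of powers. -/
theorem lintegral_exp_le {g : Fin D → ℝ} (hg : ∀ k, 0 ≤ g k)
    (hinv : ∀ g : Matrix.unitaryGroup (Fin n) ℂ,
      Measure.map (fun U : Matrix.unitaryGroup (Fin n) ℂ => g * U) μ = μ)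
    {v : ℝ} (hv : ∑ k : Fin D, ((k : ℕ) + 1 : ℝ) * g k ^ 2 ≤ v) (c : ℝ) :
    ∫⁻ U : Matrix.unitaryGroup (Fin n) ℂ, ENNReal.ofReal (Real.exp (c * ‖∑ k : Fin D, (g k : ℂ) *
      ((U : Matrix (Fin n) (Fin n) ℂ) ^ ((k : ℕ) + 1)).trace‖)) ∂μ ≤
      ENNReal.ofReal (2 * Real.exp (c ^ 2 * v)) := by
  set Q : Matrix.unitaryGroup (Fin n) ℂ → ℂ := fun U => ∑ k : Fin D, (g k : ℂ) *
      ((U : Matrix (Fin n) (Fin n) ℂ) ^ ((k : ℕ) + 1)).trace with hQ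
  have hQm : BddMeas Q := bddMeas_sum_trace g
  have hv0 : 0 ≤ ∑ k : Fin D, ((k : ℕ) + 1 : ℝ) * g k ^ 2 :=
    Finset.sum_nonneg fun k _ => by positivity
  have hterm : ∀ (m : ℕ) (x : ℝ), 0 ≤ 2 * ((c * x) ^ (2 * m) / ((2 * m).factorial : ℝ)) := by
    intro m x
    have : 0 ≤ (c * x) ^ (2 * m) := by rw [pow_mul]; positivity
    positivity
  have hsum : ∀ x : ℝ, Summable fun m : ℕ => 2 * ((c * x) ^ (2 * m) / ((2 * m).factorial : ℝ)) :=
    fun x => (Real.hasSum_cosh (c * x)).summable.mul_left 2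
  calc _ ≤ ∫⁻ U, ∑' m : ℕ, ENNReal.ofReal
        (2 * ((c * ‖Q U‖) ^ (2 * m) / ((2 * m).factorial : ℝ))) ∂μ := by
        refine lintegral_mono fun U => ?_
        rw [← ENNReal.ofReal_tsum_of_nonneg (fun m => hterm m _) (hsum _)]
        exact ENNReal.ofReal_le_ofReal (exp_le_tsum _)
    _ = ∑' m : ℕ, ∫⁻ U, ENNReal.ofReal
        (2 * ((c * ‖Q U‖) ^ (2 * m) / ((2 * m).factorial : ℝ))) ∂μ := by
        refine lintegral_tsum fun m => ?_
        have := hQm.1.norm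
        exact (by fun_prop : Measurable fun U => ENNReal.ofReal
          (2 * ((c * ‖Q U‖) ^ (2 * m) / ((2 * m).factorial : ℝ)))).aemeasurable
    _ ≤ ∑' m : ℕ, ENNReal.ofReal (2 * ((c ^ 2 * v) ^ m / (m.factorial : ℝ))) := by
        refine ENNReal.tsum_le_tsum fun m => ?_
        have hi : Integrable (fun U => ‖Q U‖ ^ (2 * m)) μ := by
          obtain ⟨h1, C, hC⟩ := hQm
          refine Integrable.of_bound (h1.norm.pow_const _).aestronglyMeasurable (C ^ (2 * m))
            (Filter.Eventually.of_forall fun U => ?_)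
          rw [norm_pow, norm_norm]
          exact pow_le_pow_left₀ (norm_nonneg _) (hC U) _
        have he : ∀ U, 2 * ((c * ‖Q U‖) ^ (2 * m) / ((2 * m).factorial : ℝ)) =
            (2 * c ^ (2 * m) / ((2 * m).factorial : ℝ)) * ‖Q U‖ ^ (2 * m) := by
          intro U; rw [mul_pow]; ring
        have hm : (0 : ℝ) < m.factorial := by exact_mod_cast m.factorial_pos
        have h2m : (0 : ℝ) < (2 * m).factorial := by exact_mod_cast (2 * m).factorial_pos
        have hc0 : 0 ≤ c ^ (2 * m) := by rw [pow_mul]; positivity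
        rw [← ofReal_integral_eq_lintegral_ofReal]
        · refine ENNReal.ofReal_le_ofReal ?_
          simp only [he]
          rw [integral_const_mul]
          have hfac : (m.factorial : ℝ) * m.factorial ≤ (2 * m).factorial := by
            have := Nat.le_of_dvd (2 * m).factorial_pos
              (by simpa [two_mul] using Nat.factorial_mul_factorial_dvd_factorial_add m m)
            exact_mod_cast this
          calc _ ≤ (2 * c ^ (2 * m) / ((2 * m).factorial : ℝ)) * (m.factorial * v ^ m) := by
                refine mul_le_mul_of_nonneg_left ((moment_le μ g hg hinv m).trans ?_)
                  (by positivity)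
                exact mul_le_mul_of_nonneg_left (pow_le_pow_left₀ hv0 hv m) hm.le
            _ = 2 * (c ^ (2 * m) * v ^ m) * (m.factorial / (2 * m).factorial) := by ring
            _ ≤ 2 * (c ^ (2 * m) * v ^ m) * (1 / m.factorial) := by
                have : 0 ≤ v ^ m := pow_nonneg (hv0.trans hv) m
                refine mul_le_mul_of_nonneg_left ?_ (by positivity)
                rw [div_le_div_iff₀ h2m hm]
                linarith
            _ = _ := by rw [mul_pow, ← pow_mul]; ring
        · simp only [he]; exact hi.const_mul _
        · exact Filter.Eventually.of_forall fun U => hterm m _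
    _ = ENNReal.ofReal (2 * Real.exp (c ^ 2 * v)) := by
        have hE : HasSum (fun m : ℕ => (c ^ 2 * v) ^ m / (m.factorial : ℝ))
            (Real.exp (c ^ 2 * v)) := by
          rw [Real.exp_eq_exp_ℝ]
          exact NormedSpace.expSeries_div_hasSum_exp (c ^ 2 * v)
        rw [← ENNReal.ofReal_tsum_of_nonneg, tsum_mul_left, hE.tsum_eq]
        · intro m
          have := hv0.trans hv
          positivity
        · exact hE.summable.mul_left 2

end ExpMoments

end HaarRatio

/-! ### The ratio as a function of the eigenvalues -/

namespace HaarRatio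

section Deterministic

theorem prod_map_le_exp {s : Multiset ℂ} {f g : ℂ → ℝ} (h0 : ∀ a ∈ s, 0 ≤ f a)
    (h : ∀ a ∈ s, f a ≤ Real.exp (g a)) : (s.map f).prod ≤ Real.exp (s.map g).sum := by
  induction s using Multiset.induction_on with
  | empty => simp
  | cons a s ih =>
    simp only [Multiset.map_cons, Multiset.prod_cons, Multiset.sum_cons, Real.exp_add]
    exact mul_le_mul (h a (Multiset.mem_cons_self a s))
      (ih (fun b hb => h0 b (Multiset.mem_cons_of_mem hb))
        fun b hb => h b (Multiset.mem_cons_of_mem hb))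
      (Multiset.prod_nonneg fun x hx => by
        obtain ⟨b, hb, rfl⟩ := Multiset.mem_map.mp hx
        exact h0 b (Multiset.mem_cons_of_mem hb))
      (Real.exp_pos _).le

theorem sum_map_affine (s : Multiset ℂ) (ψ : ℂ → ℂ) (A : ℂ) (F : ℝ) :
    (s.map fun a => (A * ψ a).re + F * (1 + 2 * (ψ a).re)).sum =
      (A * (s.map ψ).sum).re + F * (s.card + 2 * ((s.map ψ).sum).re) := by
  induction s using Multiset.induction_on with
  | empty => simp
  | cons a s ih =>
    rw [Multiset.map_cons, Multiset.sum_cons, ih, Multiset.map_cons, Multiset.sum_cons,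
      Multiset.card_cons, mul_add A, Complex.add_re, Complex.add_re]
    push_cast
    ring

theorem norm_one_add_le (w : ℂ) : ‖1 + w‖ ≤ Real.exp (w.re + ‖w‖ ^ 2 / 2) := by
  have h1 : ‖1 + w‖ ^ 2 = 1 + (2 * w.re + ‖w‖ ^ 2) := by
    rw [← Complex.normSq_eq_norm_sq, ← Complex.normSq_eq_norm_sq, Complex.normSq_apply,
      Complex.normSq_apply]
    simp
    ring
  have h2 : ‖1 + w‖ ^ 2 ≤ Real.exp (w.re + ‖w‖ ^ 2 / 2) ^ 2 := by
    rw [h1, ← Real.exp_nat_mul]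
    push_cast
    rw [show (2 : ℝ) * (w.re + ‖w‖ ^ 2 / 2) = 2 * w.re + ‖w‖ ^ 2 by ring, add_comm]
    exact Real.add_one_le_exp _
  exact (sq_le_sq₀ (norm_nonneg _) (Real.exp_pos _).le).mp h2

/-- The Poisson kernel as the real part of a (summed) geometric series. -/
theorem one_div_norm_sq {r : ℝ} (hr : |r| < 1) {a : ℂ} (ha : ‖a‖ = 1) :
    1 / ‖1 - r * a‖ ^ 2 = (1 + 2 * (r * a / (1 - r * a)).re) / (1 - r ^ 2) := by
  have hne : (1 : ℂ) - r * a ≠ 0 := by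
    intro h
    have : ‖(r : ℂ) * a‖ = 1 := by rw [← sub_eq_zero.mp h, norm_one]
    rw [norm_mul, ha, Complex.norm_real, Real.norm_eq_abs] at this
    linarith
  have hpos : 0 < ‖1 - r * a‖ ^ 2 := by
    have := norm_pos_iff.mpr hne
    positivity
  have hr2 : 0 < 1 - r ^ 2 := by
    have := (sq_lt_one_iff_abs_lt_one r).mpr hr
    linarith
  have ha2 : a.re * a.re + a.im * a.im = 1 := by
    rw [← Complex.normSq_apply, Complex.normSq_eq_norm_sq, ha, one_pow]
  have hN : ‖1 - r * a‖ ^ 2 = 1 - 2 * r * a.re + r ^ 2 := by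
    rw [← Complex.normSq_eq_norm_sq, Complex.normSq_apply]
    simp
    linear_combination r ^ 2 * ha2
  have hre : (r * a / (1 - r * a)).re = (r * a.re - r ^ 2) / ‖1 - r * a‖ ^ 2 := by
    rw [Complex.div_re, Complex.normSq_eq_norm_sq, ← add_div]
    congr 1
    simp
    linear_combination (-r ^ 2) * ha2
  rw [hre, div_eq_div_iff hpos.ne' hr2.ne', add_mul, mul_assoc 2, div_mul_cancel₀ _ hpos.ne', hN]
  ring

/-- The factor of the ratio at one eigenvalue, to second order. Here `N` plays the role of the
dimension, and the error term `|1 - r a|⁻²` appears through `one_div_norm_sq`. -/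
theorem factor_le {N B c r : ℝ} (hN : 0 < N) (hB : 0 ≤ B) (hc : 0 < c) (hr0 : r ≠ 0)
    (hr : |r| < 1) {X X' a : ℂ} (ha : ‖a‖ = 1) (hX : c / N ≤ |‖X‖ - 1|)
    (hXX : ‖X - X'‖ ≤ B / N) (hXr : ‖X - r‖ ≤ B / N) :
    ‖1 - X' * a‖ / ‖1 - X * a‖ ≤
      Real.exp ((((X - X') / r) * (r * a / (1 - r * a))).re +
        ((B ^ 2 * (1 + B / c) + B ^ 2 * (1 + B / c) ^ 2 / 2) / N ^ 2 / (1 - r ^ 2)) *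
          (1 + 2 * (r * a / (1 - r * a)).re)) := by
  set L := 1 + B / c with hL
  have hL0 : 0 < L := by positivity
  have hrC : (r : ℂ) ≠ 0 := by exact_mod_cast hr0
  have hlow : c / N ≤ ‖1 - X * a‖ := by
    refine hX.trans ?_
    have h := abs_norm_sub_norm_le (X * a) 1
    rw [norm_mul, ha, mul_one, norm_one, norm_sub_rev] at h
    exact h
  have hXpos : 0 < ‖1 - X * a‖ := lt_of_lt_of_le (by positivity) hlow
  have hXne : 1 - X * a ≠ 0 := norm_pos_iff.mp hXpos
  have hrne : (1 : ℂ) - r * a ≠ 0 := by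
    intro h
    have : ‖(r : ℂ) * a‖ = 1 := by rw [← sub_eq_zero.mp h, norm_one]
    rw [norm_mul, ha, Complex.norm_real, Real.norm_eq_abs] at this
    linarith
  have hrpos : 0 < ‖1 - r * a‖ := norm_pos_iff.mpr hrne
  have hcomp : ‖1 - r * a‖ ≤ L * ‖1 - X * a‖ := by
    have h1 : ‖1 - r * a‖ ≤ ‖1 - X * a‖ + ‖X - r‖ := by
      have : (1 : ℂ) - r * a = (1 - X * a) + (X - r) * a := by ring
      rw [this]
      refine (norm_add_le _ _).trans ?_
      rw [norm_mul, ha, mul_one]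
    have h2 : B / N ≤ B / c * ‖1 - X * a‖ := by
      calc B / N = B / c * (c / N) := by field_simp
        _ ≤ _ := mul_le_mul_of_nonneg_left hlow (by positivity)
    rw [hL, add_mul, one_mul]
    linarith
  have hinv : ‖1 - X * a‖⁻¹ ≤ L * ‖1 - r * a‖⁻¹ := by
    rw [inv_le_iff_one_le_mul₀ hXpos]
    have : 1 ≤ ‖1 - r * a‖⁻¹ * (L * ‖1 - X * a‖) := by
      rw [inv_mul_eq_div, one_le_div hrpos]; exact hcomp
    linarith
  set w : ℂ := (X - X') * a / (1 - X * a) with hw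
  have h1w : (1 - X' * a) / (1 - X * a) = 1 + w := by
    rw [hw, div_eq_iff hXne, add_mul, div_mul_cancel₀ _ hXne]
    ring
  have hdecomp : w = ((X - X') / r) * (r * a / (1 - r * a)) +
      (X - X') * (X - r) * a ^ 2 / ((1 - X * a) * (1 - r * a)) := by
    have e1 : ((X - X') / r) * (r * a / (1 - r * a)) = (X - X') * a / (1 - r * a) := by
      rw [div_mul_div_comm, mul_comm (r : ℂ) (1 - r * a), ← mul_assoc, mul_right_comm,
        mul_div_mul_right _ _ hrC]
    rw [hw, e1, div_add_div _ _ hrne (mul_ne_zero hXne hrne),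
      div_eq_div_iff hXne (mul_ne_zero hrne (mul_ne_zero hXne hrne))]
    ring
  set P := ‖1 - r * a‖⁻¹ with hP
  have hP0 : 0 ≤ P := by positivity
  have hwn : ‖w‖ ≤ B / N * (L * P) := by
    rw [hw, norm_div, norm_mul, ha, mul_one, div_eq_mul_inv]
    exact mul_le_mul hXX hinv (by positivity) (by positivity)
  have hwre : w.re ≤ (((X - X') / r) * (r * a / (1 - r * a))).re + (B / N) ^ 2 * L * P ^ 2 := by
    rw [hdecomp, Complex.add_re]
    gcongr
    refine (Complex.re_le_norm _).trans ?_
    rw [norm_div, norm_mul, norm_mul, norm_mul, norm_pow, ha, one_pow, mul_one, div_eq_mul_inv,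
      mul_inv]
    calc ‖X - X'‖ * ‖X - r‖ * (‖1 - X * a‖⁻¹ * ‖1 - r * a‖⁻¹)
        ≤ B / N * (B / N) * (L * P * P) := by gcongr
      _ = _ := by ring
  rw [← norm_div, h1w]
  refine (norm_one_add_le w).trans (Real.exp_le_exp.mpr ?_)
  have hPP : P ^ 2 = (1 + 2 * (r * a / (1 - r * a)).re) / (1 - r ^ 2) := by
    rw [hP, inv_pow, ← one_div, one_div_norm_sq hr ha]
  have hw2 : ‖w‖ ^ 2 ≤ (B / N * (L * P)) ^ 2 := pow_le_pow_left₀ (norm_nonneg _) hwn 2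
  calc w.re + ‖w‖ ^ 2 / 2 ≤ (((X - X') / r) * (r * a / (1 - r * a))).re +
        (B / N) ^ 2 * L * P ^ 2 + (B / N * (L * P)) ^ 2 / 2 := by gcongr
    _ = (((X - X') / r) * (r * a / (1 - r * a))).re +
        (B ^ 2 * L + B ^ 2 * L ^ 2 / 2) / N ^ 2 * P ^ 2 := by ring
    _ = _ := by rw [hPP]; ring

/-- The ratio of the two products over the eigenvalues is controlled by the single statistic
`∑ r a / (1 - r a)`, where `r = n / (n + 1)`. -/
theorem ratio_le {n : ℕ} (hn : 1 ≤ n) {B c : ℝ} (hB : 0 ≤ B) (hc : 0 < c)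
    {s : Multiset ℂ} (hs : s.card = n) (hs1 : ∀ a ∈ s, ‖a‖ = 1) {X X' : ℂ}
    (hX : c / n ≤ |‖X‖ - 1|) (hXX : ‖X - X'‖ ≤ B / n)
    (hXr : ‖X - ((n / (n + 1) : ℝ) : ℂ)‖ ≤ B / n) :
    ‖(s.map fun a => 1 - X' * a).prod / (s.map fun a => 1 - X * a).prod‖ ≤
      Real.exp ((2 * B + 4 * (B ^ 2 * (1 + B / c) + B ^ 2 * (1 + B / c) ^ 2 / 2)) *
        (1 + ‖(s.map fun a => ((n / (n + 1) : ℝ) : ℂ) * a /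
          (1 - ((n / (n + 1) : ℝ) : ℂ) * a)).sum / n‖)) := by
  have hN : (1 : ℝ) ≤ n := by exact_mod_cast hn
  have hN0 : (0 : ℝ) < n := by linarith
  set r : ℝ := n / (n + 1) with hr
  have hr0 : 0 < r := by positivity
  have hr1 : 1 - r = 1 / (n + 1) := by rw [hr]; field_simp; ring
  have hrlt : r < 1 := by
    have : (0 : ℝ) < 1 / (n + 1) := by positivity
    linarith
  have habs : |r| < 1 := by rwa [abs_of_pos hr0]
  set E := B ^ 2 * (1 + B / c) + B ^ 2 * (1 + B / c) ^ 2 / 2 with hE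
  have hE0 : 0 ≤ E := by positivity
  set ψ : ℂ → ℂ := fun a => (r : ℂ) * a / (1 - (r : ℂ) * a) with hψ
  set Ψ := (s.map ψ).sum with hΨ
  set q := ‖Ψ / n‖ with hq
  have hΨq : ‖Ψ‖ = n * q := by
    rw [hq, norm_div, Complex.norm_natCast]; field_simp
  have hq0 : 0 ≤ q := norm_nonneg _
  have hprod : ‖(s.map fun a => 1 - X' * a).prod / (s.map fun a => 1 - X * a).prod‖ =
      (s.map fun a => ‖1 - X' * a‖ / ‖1 - X * a‖).prod := by
    rw [Multiset.prod_map_div, norm_div]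
    have hnp : ∀ f : ℂ → ℂ, ‖(s.map f).prod‖ = (s.map fun a => ‖f a‖).prod := by
      intro f
      have h := map_multiset_prod (normHom : ℂ →*₀ ℝ) (s.map f)
      rw [Multiset.map_map] at h
      exact h
    rw [hnp, hnp]
  rw [hprod]
  refine (prod_map_le_exp (fun a _ => by positivity) fun a ha =>
    factor_le hN0 hB hc hr0.ne' habs (hs1 a ha) hX hXX hXr).trans (Real.exp_le_exp.mpr ?_)
  rw [sum_map_affine s ψ, hs]
  have h1 : (((X - X') / r) * Ψ).re ≤ 2 * B * q := by
    refine (Complex.re_le_norm _).trans ?_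
    rw [norm_mul, norm_div, Complex.norm_real, Real.norm_eq_abs, abs_of_pos hr0, hΨq]
    calc ‖X - X'‖ / r * (n * q) ≤ (B / n) / r * (n * q) := by gcongr
      _ = B * ((n + 1) / n) * q := by rw [hr]; field_simp
      _ ≤ B * 2 * q := by
          gcongr
          rw [div_le_iff₀ hN0]; linarith
      _ = _ := by ring
  have hr2 : 1 / (2 * n) ≤ 1 - r ^ 2 := by
    have h2 : 1 / (2 * n : ℝ) ≤ 1 / (n + 1) := by
      apply one_div_le_one_div_of_le <;> linarith
    nlinarith
  have hr2' : 0 < 1 - r ^ 2 := lt_of_lt_of_le (by positivity) hr2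
  have h2 : E / n ^ 2 / (1 - r ^ 2) * (n + 2 * Ψ.re) ≤ 4 * E * (1 + q) := by
    have h3 : (n : ℝ) + 2 * Ψ.re ≤ n * (1 + 2 * q) := by
      have := Complex.re_le_norm Ψ
      rw [hΨq] at this
      linarith
    have h4 : 1 / (1 - r ^ 2) ≤ 2 * n := by
      rw [div_le_iff₀ hr2']
      rw [div_le_iff₀ (by positivity)] at hr2
      linarith
    calc E / n ^ 2 / (1 - r ^ 2) * (n + 2 * Ψ.re)
        ≤ E / n ^ 2 / (1 - r ^ 2) * (n * (1 + 2 * q)) := by gcongr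
      _ = E / n * (1 / (1 - r ^ 2)) * (1 + 2 * q) := by field_simp
      _ ≤ E / n * (2 * n) * (1 + 2 * q) := by gcongr
      _ = 2 * E * (1 + 2 * q) := by field_simp
      _ ≤ _ := by nlinarith
  calc _ ≤ 2 * B * q + 4 * E * (1 + q) := add_le_add h1 h2
    _ ≤ _ := by nlinarith

end Deterministic

end HaarRatio

/-! ### Uniform bound over the dimension -/

namespace HaarRatio

section Assembly

open Filter Topology

theorem half_le_abs_exp_sub_one {u y : ℝ} (hu0 : 0 ≤ u) (hu1 : u ≤ 1) (hy : u ≤ |y|) :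
    u / 2 ≤ |Real.exp y - 1| := by
  rcases le_total 0 y with h | h
  · rw [abs_of_nonneg h] at hy
    have := Real.add_one_le_exp y
    rw [abs_of_nonneg (by linarith)]
    linarith
  · rw [abs_of_nonpos h] at hy
    have h1 := Real.add_one_le_exp (-y)
    have h2 : Real.exp y * Real.exp (-y) = 1 := by rw [← Real.exp_add]; simp
    have h3 : Real.exp y ≤ 1 := Real.exp_le_one_iff.mpr h
    rw [abs_of_nonpos (by linarith)]
    have h4 := Real.exp_pos y
    nlinarith

/-- The three estimates on the points `X = e^{2πiz/n}`, `X' = e^{2πiz'/n}` which `ratio_le`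
needs, with constants depending only on bounds for `|z|`, `|z'|` and `|Im z|`. -/
theorem exp_point_bounds {n : ℕ} (hn : 1 ≤ n) {M δ : ℝ} (hδ : 0 < δ) (hδ1 : δ ≤ 1)
    {z z' : ℂ} (hz : ‖z‖ ≤ M) (hz' : ‖z'‖ ≤ M) (him : δ ≤ |z.im|) :
    (δ / 2) / n ≤ |‖Complex.exp (2 * Real.pi * Complex.I * z / n)‖ - 1| ∧
    ‖Complex.exp (2 * Real.pi * Complex.I * z / n) -
      Complex.exp (2 * Real.pi * Complex.I * z' / n)‖ ≤
      (2 * (2 * Real.pi * M * Real.exp (2 * Real.pi * M)) + 1) / n ∧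
    ‖Complex.exp (2 * Real.pi * Complex.I * z / n) - ((n / (n + 1) : ℝ) : ℂ)‖ ≤
      (2 * (2 * Real.pi * M * Real.exp (2 * Real.pi * M)) + 1) / n := by
  have hN : (1 : ℝ) ≤ n := by exact_mod_cast hn
  have hN0 : (0 : ℝ) < n := by linarith
  have hM : 0 ≤ M := (norm_nonneg _).trans hz
  have hpi := Real.pi_pos
  set B := 2 * Real.pi * M * Real.exp (2 * Real.pi * M) with hB
  have hB0 : 0 ≤ B := by positivity
  have key : ∀ ζ : ℂ, ‖ζ‖ ≤ M →
      ‖Complex.exp (2 * Real.pi * Complex.I * ζ / n) - 1‖ ≤ B / n := by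
    intro ζ hζ
    have hw : ‖2 * Real.pi * Complex.I * ζ / n‖ ≤ 2 * Real.pi * M / n := by
      simp only [norm_div, norm_mul, Complex.norm_I, Complex.norm_natCast, Complex.norm_real,
        Real.norm_eq_abs, abs_of_pos hpi, Complex.norm_ofNat, mul_one]
      gcongr
    have hw' : ‖2 * Real.pi * Complex.I * ζ / n‖ ≤ 2 * Real.pi * M :=
      hw.trans (div_le_self (by positivity) hN)
    have h := Complex.norm_exp_sub_sum_le_norm_mul_exp (2 * Real.pi * Complex.I * ζ / n) 1
    simp only [Finset.sum_range_one, pow_zero, Nat.factorial_zero, Nat.cast_one, div_one,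
      pow_one] at h
    refine h.trans ?_
    calc _ ≤ 2 * Real.pi * M / n * Real.exp (2 * Real.pi * M) := by gcongr
      _ = _ := by rw [hB]; ring
  refine ⟨?_, ?_, ?_⟩
  · have hre : (2 * Real.pi * Complex.I * z / n).re = -(2 * Real.pi * z.im) / n := by
      rw [Complex.div_natCast_re]
      simp
    rw [Complex.norm_exp, hre, div_right_comm]
    apply half_le_abs_exp_sub_one (by positivity) (div_le_one_of_le₀ (by linarith) hN0.le)
    rw [abs_div, abs_of_pos hN0, abs_neg, abs_mul, abs_of_pos (by positivity : 0 < 2 * Real.pi)]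
    gcongr
    nlinarith [Real.pi_gt_three, abs_nonneg z.im]
  · have : Complex.exp (2 * Real.pi * Complex.I * z / n) -
        Complex.exp (2 * Real.pi * Complex.I * z' / n) =
        (Complex.exp (2 * Real.pi * Complex.I * z / n) - 1) -
        (Complex.exp (2 * Real.pi * Complex.I * z' / n) - 1) := by ring
    rw [this]
    calc _ ≤ B / n + B / n := (norm_sub_le _ _).trans (add_le_add (key z hz) (key z' hz'))
      _ = 2 * B / n := by ring
      _ ≤ _ := by gcongr; linarith
  · have e : (1 : ℂ) - ((n / (n + 1) : ℝ) : ℂ) = ((1 / (n + 1) : ℝ) : ℂ) := by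
      have h0 : (1 : ℝ) - n / (n + 1) = 1 / (n + 1) := by field_simp; ring
      rw [← h0]; push_cast; ring
    have : Complex.exp (2 * Real.pi * Complex.I * z / n) - ((n / (n + 1) : ℝ) : ℂ) =
        (Complex.exp (2 * Real.pi * Complex.I * z / n) - 1) + ((1 / (n + 1) : ℝ) : ℂ) := by
      rw [← e]; ring
    rw [this]
    have h1 : ‖((1 / (n + 1) : ℝ) : ℂ)‖ ≤ 1 / n := by
      rw [Complex.norm_real, Real.norm_eq_abs, abs_of_pos (by positivity)]
      apply one_div_le_one_div_of_le <;> linarith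
    calc _ ≤ B / n + 1 / n := (norm_add_le _ _).trans (add_le_add (key z hz) h1)
      _ = (B + 1) / n := by ring
      _ ≤ _ := by gcongr; linarith

/-- The variance proxy of `moment_le` for the weights `r^{k+1} / n`, with `r = n / (n + 1)`. -/
theorem weight_variance_le {n : ℕ} (hn : 1 ≤ n) (D : ℕ) :
    ∑ k : Fin D, ((k : ℕ) + 1 : ℝ) * (((n : ℝ) / (n + 1)) ^ ((k : ℕ) + 1) / n) ^ 2 ≤ 4 := by
  have hN : (1 : ℝ) ≤ n := by exact_mod_cast hn
  have hN0 : (0 : ℝ) < n := by linarith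
  set r : ℝ := n / (n + 1) with hr
  have hr0 : 0 < r := by positivity
  have hr1 : 1 - r = 1 / (n + 1) := by rw [hr]; field_simp; ring
  have hpos : (0 : ℝ) < 1 / (n + 1) := by positivity
  have hrlt : r < 1 := by linarith
  have hx : r ^ 2 < 1 := by nlinarith
  have h1x : 1 / (n + 1 : ℝ) ≤ 1 - r ^ 2 := by nlinarith
  have hsum := hasSum_coe_mul_geometric_of_norm_lt_one (r := r ^ 2)
    (by rw [Real.norm_eq_abs, abs_of_nonneg (by positivity)]; exact hx)
  have hle : ∑ k ∈ Finset.range (D + 1), (k : ℝ) * (r ^ 2) ^ k ≤ r ^ 2 / (1 - r ^ 2) ^ 2 :=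
    sum_le_hasSum _ (fun k _ => by positivity) hsum
  rw [Finset.sum_range_succ'] at hle
  have heq : ∑ k : Fin D, ((k : ℕ) + 1 : ℝ) * (r ^ ((k : ℕ) + 1) / n) ^ 2 =
      (1 / n ^ 2) * ∑ k ∈ Finset.range D, ((k + 1 : ℕ) : ℝ) * (r ^ 2) ^ (k + 1) := by
    rw [Finset.sum_range, Finset.mul_sum]
    refine Finset.sum_congr rfl fun k _ => ?_
    rw [← pow_mul, mul_comm 2, pow_mul]
    push_cast
    ring
  rw [heq]
  have hb : r ^ 2 / (1 - r ^ 2) ^ 2 ≤ (n + 1) ^ 2 := by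
    have hd : 0 < 1 - r ^ 2 := by linarith
    rw [div_le_iff₀ (by positivity), ← mul_pow]
    have : 1 ≤ (n + 1 : ℝ) * (1 - r ^ 2) := by
      rw [div_le_iff₀ (by positivity)] at h1x; linarith
    nlinarith
  calc _ ≤ 1 / (n : ℝ) ^ 2 * (n + 1) ^ 2 := by
        gcongr
        simp only [Nat.cast_zero, zero_mul, add_zero] at hle
        exact hle.trans hb
    _ ≤ 4 := by
        rw [one_div_mul_eq_div, div_le_iff₀ (by positivity)]
        nlinarith

/-- The truncated trace sums converge to the statistic appearing in `ratio_le`. -/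
theorem tendsto_norm_trace_sum {n : ℕ} (U : Matrix.unitaryGroup (Fin n) ℂ) {r : ℝ}
    (hr : |r| < 1) :
    Tendsto (fun D : ℕ => ‖∑ k : Fin D, ((r ^ ((k : ℕ) + 1) / n : ℝ) : ℂ) *
        ((U : Matrix (Fin n) (Fin n) ℂ) ^ ((k : ℕ) + 1)).trace‖) atTop
      (𝓝 ‖((star (U : Matrix (Fin n) (Fin n) ℂ)).charpoly.roots.map
        fun a => (r : ℂ) * a / (1 - (r : ℂ) * a)).sum / n‖) := by
  set A : Matrix (Fin n) (Fin n) ℂ := star (U : Matrix (Fin n) (Fin n) ℂ) with hA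
  have hAu : A ∈ Matrix.unitaryGroup (Fin n) ℂ := (star U).2
  set s := A.charpoly.roots with hs
  have htr : ∀ k : ℕ, ((U : Matrix (Fin n) (Fin n) ℂ) ^ k).trace = star (A ^ k).trace := by
    intro k
    rw [← Matrix.trace_conjTranspose, Matrix.conjTranspose_pow, hA, Matrix.star_eq_conjTranspose,
      Matrix.conjTranspose_conjTranspose]
  have hterm : ∀ D : ℕ, ‖∑ k : Fin D, ((r ^ ((k : ℕ) + 1) / n : ℝ) : ℂ) *
        ((U : Matrix (Fin n) (Fin n) ℂ) ^ ((k : ℕ) + 1)).trace‖ =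
      ‖(s.map fun a => ∑ k ∈ Finset.range D, ((r : ℂ) * a) ^ (k + 1)).sum / n‖ := by
    intro D
    rw [← norm_star]
    congr 1
    have hsw : (s.map fun a => ∑ k ∈ Finset.range D, ((r : ℂ) * a) ^ (k + 1)).sum =
        ∑ k ∈ Finset.range D, (s.map fun a => ((r : ℂ) * a) ^ (k + 1)).sum :=
      Multiset.sum_map_sum
    rw [star_sum, hsw, Finset.sum_range, Finset.sum_div]
    refine Finset.sum_congr rfl fun k _ => ?_
    simp only [mul_pow]
    rw [htr, trace_pow_eq_sum_roots, Multiset.sum_map_mul_left, star_mul', star_star,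
      Complex.star_def, Complex.conj_ofReal]
    push_cast
    ring
  simp only [hterm]
  refine Tendsto.norm (Tendsto.div_const ?_ _)
  refine tendsto_multiset_sum s fun a ha => ?_
  have ha1 : ‖(r : ℂ) * a‖ < 1 := by
    rw [norm_mul, norm_of_mem_roots hAu ha, mul_one, Complex.norm_real, Real.norm_eq_abs]
    exact hr
  have h := ((hasSum_geometric_of_norm_lt_one ha1).mul_left ((r : ℂ) * a)).tendsto_sum_nat
  simpa only [← pow_succ', ← div_eq_mul_inv] using h

/-- The moment bound in a fixed dimension, with a constant free of the dimension. -/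
theorem lintegral_ratio_le {p : ℝ} (hp : 0 < p) {K : Set ℂ} {M δ : ℝ} (hM0 : 0 ≤ M) (hδ : 0 < δ)
    (hδ1 : δ ≤ 1) (hM : ∀ z ∈ K, ‖z‖ ≤ M) (him : ∀ z ∈ K, δ ≤ |z.im|) {B C : ℝ}
    (hB : B = 2 * (2 * Real.pi * M * Real.exp (2 * Real.pi * M)) + 1)
    (hC : C = 2 * B + 4 * (B ^ 2 * (1 + B / (δ / 2)) + B ^ 2 * (1 + B / (δ / 2)) ^ 2 / 2))
    {n : ℕ} (hn : 1 ≤ n) (μ : Measure (Matrix.unitaryGroup (Fin n) ℂ)) [IsProbabilityMeasure μ]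
    (hinv : ∀ g : Matrix.unitaryGroup (Fin n) ℂ,
      Measure.map (fun U : Matrix.unitaryGroup (Fin n) ℂ => g * U) μ = μ) :
    ∫⁻ U : Matrix.unitaryGroup (Fin n) ℂ,
        (⨆ zz : ↥K × ↥K, ENNReal.ofReal
          (‖Matrix.det ((1 : Matrix (Fin n) (Fin n) ℂ) -
                Complex.exp (2 * Real.pi * Complex.I * (zz.2 : ℂ) / n) •
                  star (U : Matrix (Fin n) (Fin n) ℂ)) /
              Matrix.det ((1 : Matrix (Fin n) (Fin n) ℂ) -
                Complex.exp (2 * Real.pi * Complex.I * (zz.1 : ℂ) / n) •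
                  star (U : Matrix (Fin n) (Fin n) ℂ))‖ ^ p)) ∂μ ≤
      ENNReal.ofReal (Real.exp (p * C)) * ENNReal.ofReal (2 * Real.exp ((p * C) ^ 2 * 4)) := by
  have hN : (1 : ℝ) ≤ n := by exact_mod_cast hn
  have hN0 : (0 : ℝ) < n := by linarith
  have hpi := Real.pi_pos
  have hB0 : 0 ≤ B := by rw [hB]; positivity
  set r : ℝ := n / (n + 1) with hr
  have hr0 : 0 < r := by positivity
  have hrlt : r < 1 := by rw [hr, div_lt_one (by positivity)]; linarith
  have habs : |r| < 1 := by rwa [abs_of_pos hr0]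
  set Q : ℕ → Matrix.unitaryGroup (Fin n) ℂ → ℝ := fun D U =>
    ‖∑ k : Fin D, ((r ^ ((k : ℕ) + 1) / n : ℝ) : ℂ) *
        ((U : Matrix (Fin n) (Fin n) ℂ) ^ ((k : ℕ) + 1)).trace‖ with hQ
  have hQm : ∀ D, Measurable fun U => ENNReal.ofReal (Real.exp (p * C * Q D U)) := by
    intro D
    have h := (bddMeas_sum_trace (n := n) fun k : Fin D => (r ^ ((k : ℕ) + 1) / n : ℝ)).1
    exact (((h.norm).const_mul (p * C)).exp).ennreal_ofReal
  have hpt : ∀ U : Matrix.unitaryGroup (Fin n) ℂ,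
      (⨆ zz : ↥K × ↥K, ENNReal.ofReal
          (‖Matrix.det ((1 : Matrix (Fin n) (Fin n) ℂ) -
                Complex.exp (2 * Real.pi * Complex.I * (zz.2 : ℂ) / n) •
                  star (U : Matrix (Fin n) (Fin n) ℂ)) /
              Matrix.det ((1 : Matrix (Fin n) (Fin n) ℂ) -
                Complex.exp (2 * Real.pi * Complex.I * (zz.1 : ℂ) / n) •
                  star (U : Matrix (Fin n) (Fin n) ℂ))‖ ^ p)) ≤
        ENNReal.ofReal (Real.exp (p * C)) *
          liminf (fun D => ENNReal.ofReal (Real.exp (p * C * Q D U))) atTop := by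
    intro U
    have hAu : star (U : Matrix (Fin n) (Fin n) ℂ) ∈ Matrix.unitaryGroup (Fin n) ℂ := (star U).2
    have hcard := card_roots_charpoly (star (U : Matrix (Fin n) (Fin n) ℂ))
    have hnorm : ∀ a ∈ (star (U : Matrix (Fin n) (Fin n) ℂ)).charpoly.roots, ‖a‖ = 1 :=
      fun a ha => norm_of_mem_roots hAu ha
    have ht := tendsto_norm_trace_sum U habs
    have ht' := (ENNReal.continuous_ofReal.tendsto _).comp
      ((Real.continuous_exp.tendsto _).comp (ht.const_mul (p * C)))
    have hlim := ht'.liminf_eq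
    simp only [Function.comp_def] at hlim
    rw [hlim, ← ENNReal.ofReal_mul (Real.exp_pos _).le, ← Real.exp_add]
    refine iSup_le fun zz => ENNReal.ofReal_le_ofReal ?_
    obtain ⟨h1, h2, h3⟩ := exp_point_bounds hn hδ hδ1 (hM _ zz.1.2) (hM _ zz.2.2) (him _ zz.1.2)
    rw [← hB] at h2 h3
    have h := ratio_le hn hB0 (half_pos hδ) hcard hnorm h1 h2 h3
    rw [← hC] at h
    rw [det_one_sub_smul, det_one_sub_smul]
    refine (Real.rpow_le_rpow (norm_nonneg _) h hp.le).trans (le_of_eq ?_)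
    rw [← Real.exp_mul]
    congr 1
    ring
  calc _ ≤ ∫⁻ U, ENNReal.ofReal (Real.exp (p * C)) *
          liminf (fun D => ENNReal.ofReal (Real.exp (p * C * Q D U))) atTop ∂μ :=
        lintegral_mono hpt
    _ = ENNReal.ofReal (Real.exp (p * C)) *
          ∫⁻ U, liminf (fun D => ENNReal.ofReal (Real.exp (p * C * Q D U))) atTop ∂μ :=
        lintegral_const_mul' _ _ ENNReal.ofReal_ne_top
    _ ≤ ENNReal.ofReal (Real.exp (p * C)) *
          liminf (fun D => ∫⁻ U, ENNReal.ofReal (Real.exp (p * C * Q D U)) ∂μ) atTop := by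
        gcongr
        exact lintegral_liminf_le hQm
    _ ≤ _ := by
        gcongr
        refine liminf_le_of_frequently_le' (Frequently.of_forall fun D => ?_)
        exact lintegral_exp_le μ (fun k => by positivity) hinv (weight_variance_le hn D) (p * C)

end Assembly

end HaarRatio

/-- Uniform boundedness, over the dimension `n ≥ 1`, of the `p`-th moment of the supremum over
`(z, z′) ∈ K × K` (with `K` compact and disjoint from `ℝ`) of
`|ξ_n(z′)/ξ_n(z)|^p = |det(I − U* e^{2πiz′/n}) / det(I − U* e^{2πiz/n})|^p` under the Haar
probability measure on `U(n)`. -/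
theorem stmt_11 (p : ℝ) (hp : 0 < p) (K : Set ℂ) (hK : IsCompact K)
    (hKR : ∀ z ∈ K, z.im ≠ 0)
    (μ : (n : ℕ) → Measure (Matrix.unitaryGroup (Fin n) ℂ))
    (hprob : ∀ n, IsProbabilityMeasure (μ n))
    (hinv : ∀ n, ∀ g : Matrix.unitaryGroup (Fin n) ℂ,
      Measure.map (fun U : Matrix.unitaryGroup (Fin n) ℂ => g * U) (μ n) = μ n) :
    (⨆ (n : ℕ) (_ : 1 ≤ n),
      ∫⁻ U : Matrix.unitaryGroup (Fin n) ℂ,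
        (⨆ zz : ↥K × ↥K, ENNReal.ofReal
          (‖Matrix.det ((1 : Matrix (Fin n) (Fin n) ℂ) -
                Complex.exp (2 * Real.pi * Complex.I * (zz.2 : ℂ) / n) •
                  star (U : Matrix (Fin n) (Fin n) ℂ)) /
              Matrix.det ((1 : Matrix (Fin n) (Fin n) ℂ) -
                Complex.exp (2 * Real.pi * Complex.I * (zz.1 : ℂ) / n) •
                  star (U : Matrix (Fin n) (Fin n) ℂ))‖ ^ p)) ∂(μ n)) < ⊤ := by
  obtain ⟨M, hM0, hM⟩ : ∃ M : ℝ, 0 ≤ M ∧ ∀ z ∈ K, ‖z‖ ≤ M := by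
    obtain ⟨M, hM⟩ := hK.isBounded.exists_norm_le
    exact ⟨max M 0, le_max_right _ _, fun z hz => (hM z hz).trans (le_max_left _ _)⟩
  obtain ⟨δ, hδ, hδ1, him⟩ : ∃ δ : ℝ, 0 < δ ∧ δ ≤ 1 ∧ ∀ z ∈ K, δ ≤ |z.im| := by
    rcases K.eq_empty_or_nonempty with rfl | hne
    · exact ⟨1, one_pos, le_rfl, by simp⟩
    · obtain ⟨z₀, hz₀, hmin⟩ := hK.exists_isMinOn hne
        (Complex.continuous_im.abs.continuousOn (s := K))
      exact ⟨min |z₀.im| 1, lt_min (abs_pos.mpr (hKR z₀ hz₀)) one_pos, min_le_right _ _,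
        fun z hz => (min_le_left _ _).trans (hmin hz)⟩
  obtain ⟨B, hB⟩ : ∃ B : ℝ, B = 2 * (2 * Real.pi * M * Real.exp (2 * Real.pi * M)) + 1 :=
    ⟨_, rfl⟩
  obtain ⟨C, hC⟩ : ∃ C : ℝ,
      C = 2 * B + 4 * (B ^ 2 * (1 + B / (δ / 2)) + B ^ 2 * (1 + B / (δ / 2)) ^ 2 / 2) := ⟨_, rfl⟩
  have hfin : ENNReal.ofReal (Real.exp (p * C)) *
      ENNReal.ofReal (2 * Real.exp ((p * C) ^ 2 * 4)) < ⊤ :=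
    ENNReal.mul_lt_top ENNReal.ofReal_lt_top ENNReal.ofReal_lt_top
  refine lt_of_le_of_lt (iSup₂_le fun n hn => ?_) hfin
  have := hprob n
  exact HaarRatio.lintegral_ratio_le hp hM0 hδ hδ1 hM him hB hC hn (μ n) (hinv n)
end
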